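/- arXiv:2203.00142 — 10 statements merged into one kernel-verified Lean document; each statement's English description precedes it below -/
import Mathlib

section
/- For the first-order Kuramoto model on the complete graph with n vertices: suppose the initial data satisfy ρ_1(0) > ρ_j(0) for all 2 ≤ j ≤ n (so ρ_1(0) is the unique maximum). Then for every solution ρ and every t ≥ 0, ρ_1(t) − max_{2≤j≤n} ρ_j(t) ≥ ρ_1(0) − max_{2≤j≤n} ρ_j(0); in particular the leading gap is nondecreasing in time. -/
/-- The maximum of `f` over all vertices different from `i0` (well-defined since `n ≥ 2`). -/
noncomputable def maxExcept {n : ℕ} (hn : 2 ≤ n) (i0 : Fin n) (f : Fin n → ℝ) : ℝ :=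
  (Finset.univ.erase i0).sup'
    (by
      rw [Finset.erase_nonempty (Finset.mem_univ i0)]
      exact Finset.one_lt_card_iff_nontrivial.mp
        (by simp only [Finset.card_univ, Fintype.card_fin]; omega)) f

theorem kuramoto_term_nonneg (θm : ℝ → ℝ) (hθmono : Monotone θm) (hθ0 : θm 0 = 0)
    (a b c : ℝ) (hb : 0 ≤ b) (hc : 0 ≤ c) (hba : b ≤ a) (hca : c ≤ a) :
    θm (min b c) * (b - c) ≤ θm (min a c) * (a - c) := by
  have hp : ∀ x, 0 ≤ x → 0 ≤ θm x := fun x hx => hθ0 ▸ hθmono hx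
  rw [min_eq_right hca]
  rcases le_total b c with h | h
  · have h1 : θm (min b c) * (b - c) ≤ 0 :=
      mul_nonpos_of_nonneg_of_nonpos (hp _ (le_min hb hc)) (by linarith)
    have h2 : 0 ≤ θm c * (a - c) := mul_nonneg (hp _ hc) (by linarith)
    linarith
  · rw [min_eq_right h]
    exact mul_le_mul_of_nonneg_left (by linarith) (hp _ hc)

/-- First-order Kuramoto model on the complete graph with `n` vertices:
if vertex `1` (here the vertex `i0` with `i0.val = 0`) is the unique initial maximizer,
then the leading gap `ρ_1(t) - max_{j ≠ 1} ρ_j(t)` is bounded below by its initial value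
for all `t ≥ 0`. -/
theorem kuramoto_complete_gap_nondecreasing
    (n : ℕ) (hn : 2 ≤ n) (κ : ℝ) (hκ : 0 < κ)
    (θm : ℝ → ℝ) (L : NNReal) (hθlip : LipschitzWith L θm) (hθmono : Monotone θm)
    (hθ0 : θm 0 = 0) (hθpos : ∀ x : ℝ, 0 < x → 0 < θm x)
    (ρ : ℝ → Fin n → ℝ)
    (hode : ∀ t ≥ (0 : ℝ), ∀ j : Fin n, HasDerivAt (fun s => ρ s j)
      (κ * ∑ k : Fin n, θm (min (ρ t j) (ρ t k)) * (ρ t j - ρ t k)) t)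
    (hrange : ∀ t ≥ (0 : ℝ), ∀ j : Fin n, ρ t j ∈ Set.Icc (0 : ℝ) 1)
    (hsum : ∀ t ≥ (0 : ℝ), ∑ j : Fin n, ρ t j = 1)
    (i0 : Fin n) (hi0 : (i0 : ℕ) = 0)
    (hmax : ∀ j : Fin n, j ≠ i0 → ρ 0 j < ρ 0 i0) :
    ∀ t ≥ (0 : ℝ),
      ρ 0 i0 - maxExcept hn i0 (ρ 0) ≤ ρ t i0 - maxExcept hn i0 (ρ t) := by
  intro t ht
  have hd : ∀ s ≥ (0 : ℝ), ∀ j, HasDerivAt (fun s => ρ s i0 - ρ s j)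
      (κ * ∑ k : Fin n, θm (min (ρ s i0) (ρ s k)) * (ρ s i0 - ρ s k)
        - κ * ∑ k : Fin n, θm (min (ρ s j) (ρ s k)) * (ρ s j - ρ s k)) s :=
    fun s hs j => (hode s hs i0).sub (hode s hs j)
  have key : Set.Icc 0 t ⊆ {s | (fun j => ρ 0 i0 - ρ 0 j) ≤ (fun j => ρ s i0 - ρ s j)} := by
    apply IsClosed.Icc_subset_of_forall_exists_gt
    · rw [Set.inter_comm]
      refine IsClosed.isClosed_le (f := fun _ => fun j => ρ 0 i0 - ρ 0 j)
        (g := fun s => fun j => ρ s i0 - ρ s j) isClosed_Icc continuousOn_const ?_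
      apply continuousOn_pi.2
      intro j s hs
      exact (hd s hs.1 j).continuousAt.continuousWithinAt
    · exact fun j => le_refl (ρ 0 i0 - ρ 0 j)
    · rintro x ⟨hx, hx0, hxt⟩ y hy
      have hev : ∀ᶠ s in nhds x, ∀ j, j ≠ i0 → 0 < ρ s i0 - ρ s j := by
        rw [Filter.eventually_all]
        intro j
        by_cases hj : j = i0
        · simp [hj]
        · have h1 : 0 < ρ x i0 - ρ x j := by
            have h2 := hx j
            have h3 := hmax j hj
            simp only at h2
            linarith
          filter_upwards [(hd x hx0 j).continuousAt.eventually (lt_mem_nhds h1)] with s hs _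
          exact hs
      obtain ⟨ε, hε, hball⟩ := Metric.eventually_nhds_iff.1 hev
      have hy' : x < y := hy
      let z := min y (x + ε / 2)
      have hxz : x < z := lt_min hy' (by linarith)
      have hz2 : z ≤ x + ε / 2 := min_le_right _ _
      refine ⟨z, ?_, hxz, min_le_left _ _⟩
      intro j
      have hmono : MonotoneOn (fun s => ρ s i0 - ρ s j) (Set.Icc x z) := by
        apply monotoneOn_of_hasDerivWithinAt_nonneg (convex_Icc x z)
        · intro s hs
          exact (hd s (hx0.trans hs.1) j).continuousAt.continuousWithinAt
        · intro s hs
          rw [interior_Icc] at hs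
          exact (hd s (hx0.trans hs.1.le) j).hasDerivWithinAt
        · intro s hs
          rw [interior_Icc] at hs
          have hs0 : 0 ≤ s := hx0.trans hs.1.le
          have hle : ∀ k, ρ s k ≤ ρ s i0 := by
            intro k
            by_cases hk : k = i0
            · rw [hk]
            · have := hball (y := s) (by
                rw [Real.dist_eq, abs_lt]; constructor <;> linarith [hs.1, hs.2]) k hk
              linarith
          rw [← mul_sub]
          apply mul_nonneg hκ.le
          rw [sub_nonneg]
          apply Finset.sum_le_sum
          intro k _
          exact kuramoto_term_nonneg θm hθmono hθ0 _ _ _ (hrange s hs0 j).1 (hrange s hs0 k).1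
            (hle j) (hle k)
      exact (hx j).trans (hmono ⟨le_refl _, hxz.le⟩ ⟨hxz.le, le_refl _⟩ hxz.le)
  have hk := key (Set.right_mem_Icc.2 ht)
  obtain ⟨j, hj, hje⟩ := Finset.exists_mem_eq_sup' (s := Finset.univ.erase i0)
    (by
      rw [Finset.erase_nonempty (Finset.mem_univ i0)]
      exact Finset.one_lt_card_iff_nontrivial.mp
        (by simp only [Finset.card_univ, Fintype.card_fin]; omega)) (ρ t)
  have h1 : ρ 0 j ≤ maxExcept hn i0 (ρ 0) := Finset.le_sup' (ρ 0) hj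
  have h2 : maxExcept hn i0 (ρ t) = ρ t j := hje
  have h3 : ρ 0 i0 - ρ 0 j ≤ ρ t i0 - ρ t j := hk j
  linarith
end

section
/- For the first-order Kuramoto model on the complete graph with n vertices: let S_M = { j : ρ_j(0) = max_{1≤k≤n} ρ_k(0) } be the set of indices where the initial data attain their maximum, and let m = |S_M|. Then for every solution ρ, lim_{t→∞} ρ_j(t) = 1/m for every j ∈ S_M and lim_{t→∞} ρ_j(t) = 0 for every j ∉ S_M. -/
lemma aux_mono (f f' : ℝ → ℝ) (a : ℝ) (hf : ∀ t ≥ a, HasDerivAt f (f' t) t)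
    (h : ∀ t ≥ a, 0 ≤ f' t) : MonotoneOn f (Set.Ici a) := by
  apply monotoneOn_of_deriv_nonneg (convex_Ici a)
  · intro t ht
    exact (hf t ht).continuousAt.continuousWithinAt
  · intro t ht
    exact (hf t (interior_subset ht)).differentiableAt.differentiableWithinAt
  · intro t ht
    rw [(hf t (interior_subset ht)).deriv]
    exact h t (interior_subset ht)

lemma aux_conv (f : ℝ → ℝ) (B : ℝ) (hf : MonotoneOn f (Set.Ici 0))
    (hB : ∀ t ≥ (0 : ℝ), f t ≤ B) : ∃ l, Filter.Tendsto f Filter.atTop (nhds l) := by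
  have hm : Monotone (fun t => f (max t 0)) := by
    intro s t hst
    exact hf (Set.mem_Ici.2 (le_max_right _ _)) (Set.mem_Ici.2 (le_max_right _ _)) (max_le_max hst le_rfl)
  have hb : BddAbove (Set.range (fun t => f (max t 0))) := by
    refine ⟨B, ?_⟩
    rintro _ ⟨t, rfl⟩
    exact hB _ (le_max_right _ _)
  refine ⟨_, (tendsto_atTop_ciSup hm hb).congr' ?_⟩
  filter_upwards [Filter.eventually_ge_atTop (0 : ℝ)] with t ht
  simp [max_eq_left ht]

lemma aux_nonneg (d d' : ℝ → ℝ) (K : ℝ) (hd : ∀ t ≥ (0 : ℝ), HasDerivAt d (d' t) t)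
    (hK : ∀ t ≥ (0 : ℝ), |d' t| ≤ K * |d t|) (h0 : 0 ≤ d 0) (t : ℝ) (ht : 0 ≤ t) :
    0 ≤ d t := by
  by_contra! hneg
  have hc : ContinuousOn d (Set.Icc 0 t) := fun s hs =>
    (hd s hs.1).continuousAt.continuousWithinAt
  obtain ⟨s, hs, hs0⟩ := intermediate_value_Icc' ht hc ⟨hneg.le, h0⟩
  have hm : MonotoneOn (fun u => -(d u ^ 2 * Real.exp (-(2 * K) * u))) (Set.Ici s) := by
    apply aux_mono _ (fun u => -((2 * d u * d' u) * Real.exp (-(2 * K) * u)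
      + d u ^ 2 * (Real.exp (-(2 * K) * u) * (-(2 * K))))) s
    · intro u hu
      have h1 := hd u (hs.1.trans hu)
      have h2 : HasDerivAt (fun u => Real.exp (-(2 * K) * u))
          (Real.exp (-(2 * K) * u) * (-(2 * K))) u := by
        simpa using ((hasDerivAt_id u).const_mul (-(2 * K))).exp
      have h3 := ((h1.pow 2).mul h2).neg
      refine h3.congr_deriv ?_
      simp
    · intro u hu
      have h1 := hK u (hs.1.trans hu)
      have h2 : d u * d' u ≤ K * d u ^ 2 := by
        calc d u * d' u ≤ |d u * d' u| := le_abs_self _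
          _ = |d u| * |d' u| := abs_mul _ _
          _ ≤ |d u| * (K * |d u|) := by gcongr
          _ = K * |d u| ^ 2 := by ring
          _ = K * d u ^ 2 := by rw [sq_abs]
      have h3 := Real.exp_pos (-(2 * K) * u)
      nlinarith [mul_nonneg h3.le (sub_nonneg.2 h2)]
  have h1 := hm (Set.mem_Ici.2 le_rfl) (Set.mem_Ici.2 hs.2) hs.2
  simp only [hs0] at h1
  have h3 := Real.exp_pos (-(2 * K) * t)
  have h4 : 0 < d t ^ 2 * Real.exp (-(2 * K) * t) := mul_pos (by nlinarith) h3
  nlinarith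

/-- First-order Kuramoto model on the complete graph with `n` vertices:
let `S` be the set of indices at which the initial data attain their maximum and
`m = |S|`.  Then `ρ_j(t) → 1/m` for `j ∈ S` and `ρ_j(t) → 0` for `j ∉ S` as `t → ∞`. -/
theorem kuramoto_complete_asymptotic_state
    (n : ℕ) (hn : 2 ≤ n) (κ : ℝ) (hκ : 0 < κ)
    (θm : ℝ → ℝ) (L : NNReal) (hθlip : LipschitzWith L θm) (hθmono : Monotone θm)
    (hθ0 : θm 0 = 0) (hθpos : ∀ x : ℝ, 0 < x → 0 < θm x)
    (ρ : ℝ → Fin n → ℝ)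
    (hode : ∀ t ≥ (0 : ℝ), ∀ j : Fin n, HasDerivAt (fun s => ρ s j)
      (κ * ∑ k : Fin n, θm (min (ρ t j) (ρ t k)) * (ρ t j - ρ t k)) t)
    (hrange : ∀ t ≥ (0 : ℝ), ∀ j : Fin n, ρ t j ∈ Set.Icc (0 : ℝ) 1)
    (hsum : ∀ t ≥ (0 : ℝ), ∑ j : Fin n, ρ t j = 1)
    (S : Finset (Fin n)) (hS : ∀ j : Fin n, j ∈ S ↔ ∀ k : Fin n, ρ 0 k ≤ ρ 0 j) :
    (∀ j ∈ S, Filter.Tendsto (fun t => ρ t j) Filter.atTop (nhds (1 / (S.card : ℝ)))) ∧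
    (∀ j ∉ S, Filter.Tendsto (fun t => ρ t j) Filter.atTop (nhds 0)) := by
  have hθnn : ∀ x, 0 ≤ x → 0 ≤ θm x := fun x hx => hθ0 ▸ hθmono hx
  have hord : ∀ i j : Fin n, ρ 0 j ≤ ρ 0 i → ∀ t ≥ (0 : ℝ), ρ t j ≤ ρ t i := by
    intro i j hij t ht
    have := aux_nonneg (fun s => ρ s i - ρ s j) _ (κ * (n * (L + θm 1)))
      (fun t ht => (hode t ht i).sub (hode t ht j)) ?_ (sub_nonneg.2 hij) t ht
    · exact sub_nonneg.1 this
    intro t ht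
    rw [← mul_sub, ← Finset.sum_sub_distrib, abs_mul, abs_of_pos hκ, mul_assoc]
    gcongr
    refine (Finset.abs_sum_le_sum_abs _ _).trans ?_
    have key : ∀ k ∈ Finset.univ, |θm (min (ρ t i) (ρ t k)) * (ρ t i - ρ t k)
        - θm (min (ρ t j) (ρ t k)) * (ρ t j - ρ t k)| ≤ (L + θm 1) * |ρ t i - ρ t j| := by
      intro k _
      obtain ⟨a0, a1⟩ := hrange t ht i
      obtain ⟨b0, b1⟩ := hrange t ht j
      obtain ⟨c0, c1⟩ := hrange t ht k
      generalize ρ t i = a at *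
      generalize ρ t j = b at *
      generalize ρ t k = c at *
      have e : θm (min a c) * (a - c) - θm (min b c) * (b - c)
        = (θm (min a c) - θm (min b c)) * (a - c) + θm (min b c) * (a - b) := by ring
      rw [e]
      have h1 : |θm (min a c) - θm (min b c)| ≤ L * |a - b| := by
        have := hθlip.dist_le_mul (min a c) (min b c)
        rw [Real.dist_eq, Real.dist_eq] at this
        refine this.trans ?_
        exact mul_le_mul_of_nonneg_left (abs_inf_sub_inf_le_abs a b c) L.coe_nonneg
      have h2 : |a - c| ≤ 1 := abs_le.2 ⟨by linarith, by linarith⟩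
      have h3 : |θm (min b c)| ≤ θm 1 := by
        rw [abs_of_nonneg (hθnn _ (le_min b0 c0))]
        exact hθmono ((min_le_left _ _).trans b1)
      calc _ ≤ |(θm (min a c) - θm (min b c)) * (a - c)| + |θm (min b c) * (a - b)| :=
            abs_add_le _ _
        _ = |θm (min a c) - θm (min b c)| * |a - c| + |θm (min b c)| * |a - b| := by
            rw [abs_mul, abs_mul]
        _ ≤ (L * |a - b|) * 1 + θm 1 * |a - b| := by gcongr
        _ = _ := by ring
    refine (Finset.sum_le_sum key).trans ?_
    simp [mul_assoc]
  have hmax : ∀ j ∈ S, ∀ k, ∀ t ≥ (0 : ℝ), ρ t k ≤ ρ t j := fun j hj k =>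
    hord j k ((hS j).1 hj k)
  have hterm : ∀ j ∈ S, ∀ t ≥ (0 : ℝ), ∀ k,
      0 ≤ θm (min (ρ t j) (ρ t k)) * (ρ t j - ρ t k) := fun j hj t ht k =>
    mul_nonneg (hθnn _ (le_min (hrange t ht j).1 (hrange t ht k).1))
      (sub_nonneg.2 (hmax j hj k t ht))
  have hne : S.Nonempty := by
    have : Nonempty (Fin n) := ⟨⟨0, by omega⟩⟩
    obtain ⟨j, hj⟩ := Finite.exists_max (ρ 0)
    exact ⟨j, (hS j).2 hj⟩
  have hzero : ∀ k ∉ S, Filter.Tendsto (fun t => ρ t k) Filter.atTop (nhds 0) := by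
    intro k hk
    obtain ⟨j, hj⟩ := hne
    have hδ : 0 < ρ 0 j - ρ 0 k := by
      rw [sub_pos]
      by_contra! h
      exact hk ((hS k).2 fun l => ((hS j).1 hj l).trans h)
    have hMmono : MonotoneOn (fun t => ρ t j) (Set.Ici 0) :=
      aux_mono _ _ 0 (fun t ht => hode t ht j)
        (fun t ht => mul_nonneg hκ.le (Finset.sum_nonneg fun l _ => hterm j hj t ht l))
    have hdmono : MonotoneOn (fun t => ρ t j - ρ t k) (Set.Ici 0) := by
      refine aux_mono _ _ 0 (fun t ht => (hode t ht j).sub (hode t ht k)) ?_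
      intro t ht
      rw [← mul_sub, ← Finset.sum_sub_distrib]
      refine mul_nonneg hκ.le (Finset.sum_nonneg fun l _ => ?_)
      have hl := hmax j hj l t ht
      have hkj := hmax j hj k t ht
      have l0 := (hrange t ht l).1
      have k0 := (hrange t ht k).1
      rw [min_eq_right hl]
      have t1 := hθnn _ l0
      have t2 := hθnn _ k0
      rcases le_total (ρ t l) (ρ t k) with h | h
      · rw [min_eq_right h]
        nlinarith [mul_nonneg t1 (sub_nonneg.2 hkj)]
      · rw [min_eq_left h]
        nlinarith [mul_nonneg t1 (sub_nonneg.2 hl), mul_nonneg t2 (sub_nonneg.2 h)]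
    obtain ⟨M, hM⟩ := aux_conv _ 1 hMmono (fun t ht => (hrange t ht j).2)
    obtain ⟨D, hD⟩ := aux_conv _ 1 hdmono
      (fun t ht => by linarith [(hrange t ht j).2, (hrange t ht k).1])
    have hr : Filter.Tendsto (fun t => ρ t k) Filter.atTop (nhds (M - D)) := by
      simpa using hM.sub hD
    have hr0 : 0 ≤ M - D := ge_of_tendsto hr (by
      filter_upwards [Filter.eventually_ge_atTop (0 : ℝ)] with t ht
      exact (hrange t ht k).1)
    rcases hr0.eq_or_lt with h | hpos
    · rwa [← h] at hr
    exfalso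
    have hev := hr.eventually (lt_mem_nhds (half_lt_self hpos))
    obtain ⟨T, hT⟩ := Filter.eventually_atTop.1
      (hev.and (Filter.eventually_ge_atTop (0 : ℝ)))
    have hT0 : 0 ≤ T := (hT T le_rfl).2
    obtain ⟨c, hc⟩ : ∃ c, c = κ * (θm ((M - D) / 2) * (ρ 0 j - ρ 0 k)) := ⟨_, rfl⟩
    have hcpos : 0 < c := by
      rw [hc]
      exact mul_pos hκ (mul_pos (hθpos _ (half_pos hpos)) hδ)
    have hmm : MonotoneOn (fun t => ρ t j - c * t) (Set.Ici T) := by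
      refine aux_mono _ _ T (fun t ht => (hode t (hT0.trans ht) j).sub
        ((hasDerivAt_id t).const_mul c)) ?_
      intro t ht
      have ht0 : 0 ≤ t := hT0.trans ht
      rw [mul_one, sub_nonneg, hc]
      refine mul_le_mul_of_nonneg_left ?_ hκ.le
      refine le_trans ?_ (Finset.single_le_sum (fun l _ => hterm j hj t ht0 l)
        (Finset.mem_univ k))
      rw [min_eq_right (hmax j hj k t ht0)]
      exact mul_le_mul (hθmono (hT t ht).1.le)
        (hdmono (Set.mem_Ici.2 le_rfl) (Set.mem_Ici.2 ht0) ht0) hδ.le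
        (hθnn _ (hrange t ht0 k).1)
    have hle : T ≤ T + 2 / c := by
      have : 0 < 2 / c := by positivity
      linarith
    have h1 := hmm (Set.mem_Ici.2 le_rfl) (Set.mem_Ici.2 hle) hle
    have h2 : c * (T + 2 / c) = c * T + 2 := by field_simp
    simp only [h2] at h1
    linarith [(hrange T hT0 j).1, (hrange _ (hT0.trans hle) j).2]
  refine ⟨?_, hzero⟩
  intro j hj
  have hm : (S.card : ℝ) ≠ 0 := by
    exact_mod_cast (Finset.card_pos.2 hne).ne'
  have hlim : Filter.Tendsto (fun t => (1 - ∑ k ∈ Sᶜ, ρ t k) / (S.card : ℝ)) Filter.atTop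
      (nhds ((1 - ∑ k ∈ Sᶜ, (0 : ℝ)) / (S.card : ℝ))) :=
    (tendsto_const_nhds.sub (tendsto_finsetSum _ fun k hk =>
      hzero k (Finset.mem_compl.1 hk))).div_const _
  simp only [Finset.sum_const_zero, sub_zero] at hlim
  refine hlim.congr' ?_
  filter_upwards [Filter.eventually_ge_atTop (0 : ℝ)] with t ht
  have h1 : ∑ k ∈ S, ρ t k = S.card * ρ t j := by
    rw [← nsmul_eq_mul]
    apply Finset.sum_eq_card_nsmul
    intro k hk
    exact le_antisymm (hmax j hj k t ht) (hmax k hk j t ht)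
  have h2 := hsum t ht
  rw [← Finset.sum_add_sum_compl S, h1] at h2
  rw [div_eq_iff hm]
  linarith
end

section
/- Consider the first-order Kuramoto model on the complete graph with n vertices with κ = 1 and θ̃(x) = x^α for x ≥ 0, where α ≥ 1 is fixed. Suppose the initial data satisfy ρ_1(0) > ρ_j(0) for all 2 ≤ j ≤ n, and set δ = ρ_1(0) − max_{2≤j≤n} ρ_j(0) > 0. Then every solution ρ satisfies, for all t ≥ 0, the two-sided differential inequality δ · n^{1−α} · (1 − ρ_1(t))^α ≤ dρ_1/dt (t) ≤ n · (1 − ρ_1(t))^α. -/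
/-- First-order Kuramoto model on the complete graph with `n` vertices,
`κ = 1` and `θ̃(x) = x^α` (real power, `α ≥ 1`): if vertex `1` (the index `i0` with
`i0.val = 0`) is the unique initial maximizer and `δ` is the initial leading gap, then
`δ n^{1-α} (1-ρ_1)^α ≤ dρ_1/dt ≤ n (1-ρ_1)^α` for all `t ≥ 0`. -/
theorem kuramoto_complete_power_derivative_bounds
    (n : ℕ) (hn : 2 ≤ n) (α : ℝ) (hα : 1 ≤ α)
    (ρ : ℝ → Fin n → ℝ)
    (hode : ∀ t ≥ (0 : ℝ), ∀ j : Fin n, HasDerivAt (fun s => ρ s j)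
      (∑ k : Fin n, (min (ρ t j) (ρ t k)) ^ α * (ρ t j - ρ t k)) t)
    (hrange : ∀ t ≥ (0 : ℝ), ∀ j : Fin n, ρ t j ∈ Set.Icc (0 : ℝ) 1)
    (hsum : ∀ t ≥ (0 : ℝ), ∑ j : Fin n, ρ t j = 1)
    (i0 : Fin n) (hi0 : (i0 : ℕ) = 0)
    (hmax : ∀ j : Fin n, j ≠ i0 → ρ 0 j < ρ 0 i0)
    (δ : ℝ) (hδ : δ = ρ 0 i0 - maxExcept hn i0 (ρ 0)) (hδpos : 0 < δ) :
    ∀ t ≥ (0 : ℝ),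
      δ * (n : ℝ) ^ ((1 : ℝ) - α) * (1 - ρ t i0) ^ α ≤ deriv (fun s => ρ s i0) t ∧
      deriv (fun s => ρ s i0) t ≤ (n : ℝ) * (1 - ρ t i0) ^ α := by
  have key : ∀ t ≥ (0 : ℝ), (∀ j, ρ t j ≤ ρ t i0) → ∀ j,
      0 ≤ (∑ k : Fin n, (min (ρ t i0) (ρ t k)) ^ α * (ρ t i0 - ρ t k)) -
        ∑ k : Fin n, (min (ρ t j) (ρ t k)) ^ α * (ρ t j - ρ t k) := by
    intro t ht hm j
    rw [← Finset.sum_sub_distrib]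
    apply Finset.sum_nonneg
    intro k _
    have hk := (hrange t ht k).1
    have hj := (hrange t ht j).1
    have h1 := hm k
    have h2 := hm j
    rw [min_eq_right h1]
    have hkp : 0 ≤ (ρ t k) ^ α := Real.rpow_nonneg hk α
    have hjp : 0 ≤ (ρ t j) ^ α := Real.rpow_nonneg hj α
    rcases le_total (ρ t k) (ρ t j) with h | h
    · rw [min_eq_right h]
      nlinarith
    · rw [min_eq_left h]
      nlinarith [mul_nonneg hkp (sub_nonneg.2 h1), mul_nonneg hjp (sub_nonneg.2 h)]
  have h0 : ∀ j, j ≠ i0 → δ ≤ ρ 0 i0 - ρ 0 j := by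
    intro j hj
    have : ρ 0 j ≤ maxExcept hn i0 (ρ 0) :=
      Finset.le_sup' (ρ 0) (Finset.mem_erase.2 ⟨hj, Finset.mem_univ j⟩)
    linarith
  have hder : ∀ t ≥ (0 : ℝ), ∀ j, HasDerivAt (fun s => ρ s i0 - ρ s j)
      ((∑ k : Fin n, (min (ρ t i0) (ρ t k)) ^ α * (ρ t i0 - ρ t k)) -
        ∑ k : Fin n, (min (ρ t j) (ρ t k)) ^ α * (ρ t j - ρ t k)) t :=
    fun t ht j => (hode t ht i0).sub (hode t ht j)
  have gap : ∀ T ≥ (0 : ℝ), ∀ j, j ≠ i0 → δ ≤ ρ T i0 - ρ T j := by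
    intro T hT
    have hcl : IsClosed ({t | ∀ j, j ≠ i0 → δ ≤ ρ t i0 - ρ t j} ∩ Set.Icc 0 T) := by
      have : {t | ∀ j, j ≠ i0 → δ ≤ ρ t i0 - ρ t j} ∩ Set.Icc 0 T =
          Set.Icc 0 T ∩ ⋂ j, (⋂ (_ : j ≠ i0),
            (Set.Icc 0 T ∩ (fun s => ρ s i0 - ρ s j) ⁻¹' Set.Ici δ)) := by
        ext t
        simp only [Set.mem_inter_iff, Set.mem_setOf_eq, Set.mem_iInter, Set.mem_preimage,
          Set.mem_Ici]
        exact ⟨fun h => ⟨h.2, fun j hj => ⟨h.2, h.1 j hj⟩⟩, fun h => ⟨fun j hj => (h.2 j hj).2, h.1⟩⟩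
      rw [this]
      refine isClosed_Icc.inter (isClosed_iInter fun j => isClosed_iInter fun _ => ?_)
      refine ContinuousOn.preimage_isClosed_of_isClosed ?_ isClosed_Icc isClosed_Ici
      exact fun t ht => (hder t ht.1 j).continuousAt.continuousWithinAt
    have hsub := hcl.Icc_subset_of_forall_exists_gt (a := 0) (b := T) h0 (by
      rintro x ⟨hx, hx0, hxT⟩ y hy
      have hev : ∀ᶠ s in nhds x, ∀ j, j ≠ i0 → 0 < ρ s i0 - ρ s j := by
        rw [Filter.eventually_all]
        intro j
        by_cases hj : j = i0
        · simp [hj]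
        · have := (hder x hx0 j).continuousAt.eventually (lt_mem_nhds (hδpos.trans_le (hx j hj)))
          filter_upwards [this] with s hs _ using hs
      obtain ⟨ε, hε, hball⟩ := Metric.eventually_nhds_iff.1 hev
      have hyx : x < y := hy
      set z := min y (x + ε / 2) with hz
      have hzx : x < z := lt_min hyx (by linarith)
      have hzε : z ≤ x + ε / 2 := min_le_right _ _
      refine ⟨z, ?_, hzx, min_le_left _ _⟩
      intro j hj
      have hmono : MonotoneOn (fun s => ρ s i0 - ρ s j) (Set.Icc x z) := by
        apply monotoneOn_of_hasDerivWithinAt_nonneg (convex_Icc x z)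
          (fun t ht => (hder t (hx0.trans ht.1) j).continuousAt.continuousWithinAt)
          (fun t ht => (hder t (hx0.trans (interior_subset ht).1) j).hasDerivWithinAt)
        intro t ht
        have ht' := interior_subset ht
        refine key t (hx0.trans ht'.1) ?_ j
        intro i
        by_cases hi : i = i0
        · rw [hi]
        · have := hball (y := t) (by
            rw [Real.dist_eq, abs_of_nonneg (by linarith [ht'.1])]
            linarith [ht'.2]) i hi
          linarith
      exact (hx j hj).trans (hmono (Set.left_mem_Icc.2 hzx.le) (Set.right_mem_Icc.2 hzx.le) hzx.le))
    exact hsub (Set.right_mem_Icc.2 hT)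
  intro t ht
  rw [(hode t ht i0).deriv]
  have hm : ∀ j, ρ t j ≤ ρ t i0 := by
    intro j
    by_cases hj : j = i0
    · rw [hj]
    · linarith [gap t ht j hj]
  have hsplit := Finset.add_sum_erase Finset.univ (fun j => ρ t j) (Finset.mem_univ i0)
  rw [hsum t ht] at hsplit
  have hS : 1 - ρ t i0 = ∑ k ∈ Finset.univ.erase i0, ρ t k := by linarith
  have hα0 : 0 ≤ α := by linarith
  have hE : (∑ k : Fin n, (min (ρ t i0) (ρ t k)) ^ α * (ρ t i0 - ρ t k)) =
      ∑ k ∈ Finset.univ.erase i0, (ρ t k) ^ α * (ρ t i0 - ρ t k) := by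
    rw [← Finset.add_sum_erase Finset.univ _ (Finset.mem_univ i0)]
    simp [min_eq_right (hm _)]
  have hcard : ((Finset.univ.erase i0).card : ℝ) ≤ n := by
    have := Finset.card_erase_le (s := Finset.univ) (a := i0)
    rw [Finset.card_univ, Fintype.card_fin] at this
    exact_mod_cast this
  have hnpos : (0 : ℝ) < n := by exact_mod_cast (by omega : 0 < n)
  rw [hE]
  constructor
  · have hpm := Real.rpow_sum_le_const_mul_sum_rpow_of_nonneg (Finset.univ.erase i0)
      (f := fun k => ρ t k) hα (fun k _ => (hrange t ht k).1)
    rw [← hS] at hpm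
    have hP : 0 ≤ ∑ k ∈ Finset.univ.erase i0, (ρ t k) ^ α :=
      Finset.sum_nonneg fun k _ => Real.rpow_nonneg (hrange t ht k).1 α
    have hc : ((Finset.univ.erase i0).card : ℝ) ^ (α - 1) ≤ (n : ℝ) ^ (α - 1) :=
      Real.rpow_le_rpow (by positivity) hcard (by linarith)
    have h1 : (1 - ρ t i0) ^ α ≤ (n : ℝ) ^ (α - 1) * ∑ k ∈ Finset.univ.erase i0, (ρ t k) ^ α :=
      hpm.trans (mul_le_mul_of_nonneg_right hc hP)
    have h2 : (n : ℝ) ^ (1 - α) * (n : ℝ) ^ (α - 1) = 1 := by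
      rw [← Real.rpow_add hnpos]
      simp
    calc δ * (n : ℝ) ^ ((1 : ℝ) - α) * (1 - ρ t i0) ^ α
        ≤ δ * (n : ℝ) ^ ((1 : ℝ) - α) *
          ((n : ℝ) ^ (α - 1) * ∑ k ∈ Finset.univ.erase i0, (ρ t k) ^ α) :=
          mul_le_mul_of_nonneg_left h1 (by positivity)
      _ = δ * ((n : ℝ) ^ (1 - α) * (n : ℝ) ^ (α - 1)) *
          ∑ k ∈ Finset.univ.erase i0, (ρ t k) ^ α := by ring
      _ = ∑ k ∈ Finset.univ.erase i0, (ρ t k) ^ α * δ := by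
          rw [h2, ← Finset.sum_mul]; ring
      _ ≤ _ := by
          apply Finset.sum_le_sum
          intro k hk
          exact mul_le_mul_of_nonneg_left (gap t ht k (Finset.ne_of_mem_erase hk))
            (Real.rpow_nonneg (hrange t ht k).1 α)
  · have hS0 : 0 ≤ 1 - ρ t i0 := by linarith [(hrange t ht i0).2]
    calc ∑ k ∈ Finset.univ.erase i0, (ρ t k) ^ α * (ρ t i0 - ρ t k)
        ≤ ∑ k ∈ Finset.univ.erase i0, (1 - ρ t i0) ^ α := by
          apply Finset.sum_le_sum
          intro k hk
          have hk0 := (hrange t ht k).1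
          have hle : ρ t k ≤ 1 - ρ t i0 := by
            rw [hS]
            exact Finset.single_le_sum (f := fun k => ρ t k) (fun i _ => (hrange t ht i).1) hk
          have := Real.rpow_le_rpow hk0 hle hα0
          have hkp := Real.rpow_nonneg hk0 α
          nlinarith [(hrange t ht i0).2]
      _ = ((Finset.univ.erase i0).card : ℝ) * (1 - ρ t i0) ^ α := by
          rw [Finset.sum_const, nsmul_eq_mul]
      _ ≤ _ := mul_le_mul_of_nonneg_right hcard (Real.rpow_nonneg hS0 α)
end

section
/- Consider the first-order Kuramoto model on the complete graph with n vertices with κ = 1 and θ̃(x) = x (the case α = 1). Suppose the initial data satisfy ρ_1(0) > ρ_j(0) for all 2 ≤ j ≤ n, and set δ = ρ_1(0) − max_{2≤j≤n} ρ_j(0) > 0. Then every solution ρ satisfies, for all t ≥ 0, (1 − ρ_1(0))·e^{−n t} ≤ 1 − ρ_1(t) ≤ (1 − ρ_1(0))·e^{−δ t}; in particular ρ_1(t) converges to 1 exponentially fast. -/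
theorem kur_mono (f f' : ℝ → ℝ) (a b : ℝ) (hab : a ≤ b)
    (hf : ∀ t ∈ Set.Icc a b, HasDerivAt f (f' t) t) (h0 : ∀ t ∈ Set.Icc a b, 0 ≤ f' t) :
    f a ≤ f b := by
  have h : MonotoneOn f (Set.Icc a b) := by
    apply monotoneOn_of_hasDerivWithinAt_nonneg (f' := f') (convex_Icc a b)
    · exact fun t ht => (hf t ht).continuousAt.continuousWithinAt
    · exact fun t ht => (hf t (interior_subset ht)).hasDerivWithinAt
    · exact fun t ht => h0 t (interior_subset ht)
  exact h (Set.left_mem_Icc.2 hab) (Set.right_mem_Icc.2 hab) hab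

theorem kur_exp (f f' : ℝ → ℝ) (c T : ℝ) (hT : 0 ≤ T)
    (hf : ∀ t ∈ Set.Icc 0 T, HasDerivAt f (f' t) t)
    (h0 : ∀ t ∈ Set.Icc 0 T, 0 ≤ f' t + c * f t) :
    f 0 * Real.exp (-c * T) ≤ f T := by
  have h := kur_mono (fun t => f t * Real.exp (c * t))
    (fun t => f' t * Real.exp (c * t) + f t * (Real.exp (c * t) * (c * 1))) 0 T hT
    (fun t ht => (hf t ht).mul (((hasDerivAt_id t).const_mul c).exp))
    (fun t ht => by
      have := mul_nonneg (h0 t ht) (Real.exp_pos (c * t)).le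
      nlinarith)
  simp only [mul_zero, Real.exp_zero, mul_one] at h
  calc f 0 * Real.exp (-c * T) ≤ f T * Real.exp (c * T) * Real.exp (-c * T) :=
        mul_le_mul_of_nonneg_right h (Real.exp_pos _).le
    _ = f T := by rw [mul_assoc, ← Real.exp_add]; simp

theorem kur_gap (n : ℕ)
    (ρ : ℝ → Fin n → ℝ)
    (hode : ∀ t ≥ (0 : ℝ), ∀ j : Fin n, HasDerivAt (fun s => ρ s j)
      (∑ k : Fin n, min (ρ t j) (ρ t k) * (ρ t j - ρ t k)) t)
    (hrange : ∀ t ≥ (0 : ℝ), ∀ j : Fin n, ρ t j ∈ Set.Icc (0 : ℝ) 1)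
    (i0 : Fin n) (δ : ℝ) (hδpos : 0 < δ)
    (h0 : ∀ j, j ≠ i0 → δ ≤ ρ 0 i0 - ρ 0 j) (T : ℝ) (hT : 0 ≤ T) :
    ∀ j, j ≠ i0 → δ ≤ ρ T i0 - ρ T j := by
  have hcont : ∀ t ≥ (0:ℝ), ∀ j, ContinuousAt (fun s => ρ s i0 - ρ s j) t := fun t ht j =>
    (hode t ht i0).continuousAt.sub (hode t ht j).continuousAt
  have key : Set.Icc 0 T ⊆ {t | ∀ j, j ≠ i0 → δ ≤ ρ t i0 - ρ t j} := by
    apply IsClosed.Icc_subset_of_forall_exists_gt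
    · have : {t | ∀ j, j ≠ i0 → δ ≤ ρ t i0 - ρ t j} ∩ Set.Icc 0 T
          = Set.Icc 0 T ∩ ⋂ j, ⋂ (_ : j ≠ i0), (Set.Icc 0 T ∩
            (fun s => ρ s i0 - ρ s j) ⁻¹' Set.Ici δ) := by
        ext t
        simp only [Set.mem_inter_iff, Set.mem_ofPred_eq, Set.mem_iInter, Set.mem_preimage,
          Set.mem_Ici]
        exact ⟨fun h => ⟨h.2, fun j hj => ⟨h.2, h.1 j hj⟩⟩, fun h => ⟨fun j hj => (h.2 j hj).2, h.1⟩⟩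
      rw [this]
      refine isClosed_Icc.inter (isClosed_iInter fun j => isClosed_iInter fun _ => ?_)
      exact ContinuousOn.preimage_isClosed_of_isClosed
        (fun t ht => (hcont t ht.1 j).continuousWithinAt) isClosed_Icc isClosed_Ici
    · exact h0
    · rintro t ⟨ht, ht0, htT⟩ y hy
      have hev : ∀ᶠ s in nhds t, ∀ j, j ≠ i0 → 0 < ρ s i0 - ρ s j := by
        rw [Filter.eventually_all]
        intro j
        by_cases hj : j = i0
        · simp [hj]
        · have := (hcont t ht0 j).eventually (lt_mem_nhds (lt_of_lt_of_le hδpos (ht j hj)))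
          filter_upwards [this] with s hs _ using hs
      obtain ⟨ε, hε, hb⟩ := Metric.eventually_nhds_iff.1 hev
      have hty : t < y := hy
      refine ⟨min y (t + ε / 2), ?_, lt_min hty (by linarith), min_le_left _ _⟩
      intro j hj
      have hle : t ≤ min y (t + ε / 2) := le_min hty.le (by linarith)
      refine (ht j hj).trans (kur_mono (fun s => ρ s i0 - ρ s j) _ t _ hle
        (fun s hs => (hode s (ht0.trans hs.1) i0).sub (hode s (ht0.trans hs.1) j)) ?_)
      intro s hs
      have hs0 : 0 ≤ s := ht0.trans hs.1
      have hpos : ∀ k, ρ s k ≤ ρ s i0 := by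
        intro k
        by_cases hk : k = i0
        · rw [hk]
        · have : dist s t < ε := by
            rw [Real.dist_eq, abs_of_nonneg (by linarith [hs.1])]
            linarith [hs.2, min_le_right y (t + ε / 2)]
          linarith [hb this k hk]
      rw [← Finset.sum_sub_distrib]
      apply Finset.sum_nonneg
      intro k _
      have a1 := (hrange s hs0 k).1
      have a2 := (hrange s hs0 j).1
      have a3 := hpos k
      have a4 := hpos j
      rw [min_eq_right a3]
      rcases le_total (ρ s j) (ρ s k) with h | h
      · rw [min_eq_left h]
        nlinarith [mul_nonneg a1 (sub_nonneg.2 a3), mul_nonneg a2 (sub_nonneg.2 h)]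
      · rw [min_eq_right h]
        nlinarith [mul_nonneg a1 (sub_nonneg.2 a4)]
  exact key ⟨hT, le_rfl⟩

/-- First-order Kuramoto model on the complete graph with `n` vertices,
`κ = 1` and `θ̃(x) = x` (the case `α = 1`): if vertex `1` (the index `i0` with
`i0.val = 0`) is the unique initial maximizer and `δ` is the initial leading gap, then
`(1-ρ_1(0)) e^{-n t} ≤ 1-ρ_1(t) ≤ (1-ρ_1(0)) e^{-δ t}` for all `t ≥ 0`; in particular
`ρ_1(t) → 1` exponentially fast. -/
theorem kuramoto_complete_exponential_convergence
    (n : ℕ) (hn : 2 ≤ n)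
    (ρ : ℝ → Fin n → ℝ)
    (hode : ∀ t ≥ (0 : ℝ), ∀ j : Fin n, HasDerivAt (fun s => ρ s j)
      (∑ k : Fin n, min (ρ t j) (ρ t k) * (ρ t j - ρ t k)) t)
    (hrange : ∀ t ≥ (0 : ℝ), ∀ j : Fin n, ρ t j ∈ Set.Icc (0 : ℝ) 1)
    (hsum : ∀ t ≥ (0 : ℝ), ∑ j : Fin n, ρ t j = 1)
    (i0 : Fin n) (hi0 : (i0 : ℕ) = 0)
    (hmax : ∀ j : Fin n, j ≠ i0 → ρ 0 j < ρ 0 i0)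
    (δ : ℝ) (hδ : δ = ρ 0 i0 - maxExcept hn i0 (ρ 0)) (hδpos : 0 < δ) :
    ∀ t ≥ (0 : ℝ),
      (1 - ρ 0 i0) * Real.exp (-(n : ℝ) * t) ≤ 1 - ρ t i0 ∧
      1 - ρ t i0 ≤ (1 - ρ 0 i0) * Real.exp (-δ * t) := by
  have h0 : ∀ j, j ≠ i0 → δ ≤ ρ 0 i0 - ρ 0 j := by
    intro j hj
    have : ρ 0 j ≤ maxExcept hn i0 (ρ 0) :=
      Finset.le_sup' (ρ 0) (Finset.mem_erase.2 ⟨hj, Finset.mem_univ j⟩)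
    linarith
  have hgap := kur_gap n ρ hode hrange i0 δ hδpos h0
  have hle : ∀ t ≥ (0:ℝ), ∀ k, ρ t k ≤ ρ t i0 := by
    intro t ht k
    by_cases hk : k = i0
    · rw [hk]
    · linarith [hgap t ht k hk]
  have hn' : (2:ℝ) ≤ n := by exact_mod_cast hn
  have hd : ∀ t ≥ (0:ℝ), (∑ k : Fin n, min (ρ t i0) (ρ t k) * (ρ t i0 - ρ t k))
      = ∑ k ∈ Finset.univ.erase i0, ρ t k * (ρ t i0 - ρ t k) := by
    intro t ht
    rw [← Finset.add_sum_erase _ _ (Finset.mem_univ i0)]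
    simp only [sub_self, mul_zero, zero_add]
    exact Finset.sum_congr rfl fun k _ => by rw [min_eq_right (hle t ht k)]
  have hs : ∀ t ≥ (0:ℝ), 1 - ρ t i0 = ∑ k ∈ Finset.univ.erase i0, ρ t k := by
    intro t ht
    rw [← hsum t ht, ← Finset.add_sum_erase _ _ (Finset.mem_univ i0)]
    ring
  intro T hT
  constructor
  · refine kur_exp (fun t => 1 - ρ t i0) _ n T hT
      (fun t ht => (hode t ht.1 i0).const_sub 1) ?_
    intro t ht
    have h1 : (∑ k : Fin n, min (ρ t i0) (ρ t k) * (ρ t i0 - ρ t k)) ≤ 1 - ρ t i0 := by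
      rw [hd t ht.1, hs t ht.1]
      refine Finset.sum_le_sum fun k _ => ?_
      have b1 := hrange t ht.1 k
      have b2 := hrange t ht.1 i0
      nlinarith [mul_nonneg b1.1 (by linarith [b1.1, b2.2] : 0 ≤ 1 - (ρ t i0 - ρ t k))]
    have b2 := (hrange t ht.1 i0).2
    nlinarith
  · have := kur_exp (fun t => -(1 - ρ t i0)) _ δ T hT
      (fun t ht => ((hode t ht.1 i0).const_sub 1).neg) (by
        intro t ht
        have h1 : δ * (1 - ρ t i0) ≤
            (∑ k : Fin n, min (ρ t i0) (ρ t k) * (ρ t i0 - ρ t k)) := by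
          rw [hd t ht.1, hs t ht.1, Finset.mul_sum]
          refine Finset.sum_le_sum fun k hk => ?_
          have b1 := (hrange t ht.1 k).1
          have b2 := hgap t ht.1 k (Finset.ne_of_mem_erase hk)
          nlinarith [mul_nonneg b1 (sub_nonneg.2 b2)]
        linarith)
    linarith
end

section
/- For the first-order Kuramoto model on a general graph with n vertices: every solution ρ satisfies, for all t ≥ 0, (d/dt) Σ_{j=1}^n ρ_j(t)² = κ · Σ_{j,l=1}^n ω_{jl} · θ̃(min(ρ_j(t), ρ_l(t))) · (ρ_j(t) − ρ_l(t))², and in particular the quantity Σ_j ρ_j(t)² is nondecreasing in time. -/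
/-- First-order Kuramoto model on a general graph with `n` vertices,
given by symmetric `{0,1}`-valued adjacency weights `ω` with zero diagonal:
`dρ_j/dt = κ Σ_l ω_{jl} θ̃(min(ρ_j, ρ_l)) (ρ_j - ρ_l)`.  Every solution satisfies
`(d/dt) Σ_j ρ_j² = κ Σ_{j,l} ω_{jl} θ̃(min(ρ_j, ρ_l)) (ρ_j - ρ_l)²` for all `t ≥ 0`,
and in particular `Σ_j ρ_j²` is nondecreasing in time. -/
theorem kuramoto_graph_energy_derivative
    (n : ℕ) (hn : 2 ≤ n) (κ : ℝ) (hκ : 0 < κ)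
    (ω : Fin n → Fin n → ℝ)
    (hω01 : ∀ j l : Fin n, ω j l = 0 ∨ ω j l = 1)
    (hωsym : ∀ j l : Fin n, ω j l = ω l j)
    (hωdiag : ∀ j : Fin n, ω j j = 0)
    (θm : ℝ → ℝ) (L : NNReal) (hθlip : LipschitzWith L θm) (hθmono : Monotone θm)
    (hθ0 : θm 0 = 0) (hθpos : ∀ x : ℝ, 0 < x → 0 < θm x)
    (ρ : ℝ → Fin n → ℝ)
    (hode : ∀ t ≥ (0 : ℝ), ∀ j : Fin n, HasDerivAt (fun s => ρ s j)
      (κ * ∑ l : Fin n, ω j l * θm (min (ρ t j) (ρ t l)) * (ρ t j - ρ t l)) t)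
    (hrange : ∀ t ≥ (0 : ℝ), ∀ j : Fin n, ρ t j ∈ Set.Icc (0 : ℝ) 1)
    (hsum : ∀ t ≥ (0 : ℝ), ∑ j : Fin n, ρ t j = 1) :
    (∀ t ≥ (0 : ℝ), HasDerivAt (fun s => ∑ j : Fin n, (ρ s j) ^ 2)
      (κ * ∑ j : Fin n, ∑ l : Fin n,
        ω j l * θm (min (ρ t j) (ρ t l)) * (ρ t j - ρ t l) ^ 2) t) ∧
    MonotoneOn (fun t => ∑ j : Fin n, (ρ t j) ^ 2) (Set.Ici (0 : ℝ)) := by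
  have key : ∀ t ≥ (0 : ℝ), HasDerivAt (fun s => ∑ j : Fin n, (ρ s j) ^ 2)
      (κ * ∑ j : Fin n, ∑ l : Fin n,
        ω j l * θm (min (ρ t j) (ρ t l)) * (ρ t j - ρ t l) ^ 2) t := by
    intro t ht
    have h := HasDerivAt.fun_sum (u := Finset.univ) (fun j _ => (hode t ht j).fun_pow 2)
    refine h.congr_deriv ?_
    have e1 : ∑ j : Fin n, ∑ l : Fin n,
        ω j l * θm (min (ρ t j) (ρ t l)) * (ρ t j - ρ t l) * ρ t l =
        - ∑ j : Fin n, ∑ l : Fin n,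
        ω j l * θm (min (ρ t j) (ρ t l)) * (ρ t j - ρ t l) * ρ t j := by
      rw [Finset.sum_comm, ← Finset.sum_neg_distrib]
      refine Finset.sum_congr rfl fun j _ => ?_
      rw [← Finset.sum_neg_distrib]
      refine Finset.sum_congr rfl fun l _ => ?_
      rw [hωsym l j, min_comm]
      ring
    have e2 : ∑ j : Fin n, ∑ l : Fin n,
        ω j l * θm (min (ρ t j) (ρ t l)) * (ρ t j - ρ t l) ^ 2 =
        ∑ j : Fin n, ∑ l : Fin n,
        ω j l * θm (min (ρ t j) (ρ t l)) * (ρ t j - ρ t l) * ρ t j -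
        ∑ j : Fin n, ∑ l : Fin n,
        ω j l * θm (min (ρ t j) (ρ t l)) * (ρ t j - ρ t l) * ρ t l := by
      simp only [← Finset.sum_sub_distrib]
      refine Finset.sum_congr rfl fun j _ => Finset.sum_congr rfl fun l _ => ?_
      ring
    rw [e2, e1, sub_neg_eq_add, ← two_mul, Finset.mul_sum, Finset.mul_sum]
    refine Finset.sum_congr rfl fun j _ => ?_
    rw [← Finset.sum_mul]
    push_cast
    ring
  refine ⟨key, ?_⟩
  refine monotoneOn_of_hasDerivWithinAt_nonneg (convex_Ici 0)
    (fun t ht => (key t ht).continuousAt.continuousWithinAt)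
    (fun t ht => (key t (interior_subset ht)).hasDerivWithinAt) ?_
  intro t ht
  have ht0 : t ≥ 0 := interior_subset ht
  refine mul_nonneg hκ.le (Finset.sum_nonneg fun j _ => Finset.sum_nonneg fun l _ => ?_)
  refine mul_nonneg (mul_nonneg ?_ ?_) (sq_nonneg _)
  · rcases hω01 j l with h | h <;> rw [h] <;> norm_num
  · rw [← hθ0]
    exact hθmono (le_min (hrange t ht0 j).1 (hrange t ht0 l).1)
end

section
/- For the first-order Kuramoto model on a general graph with n vertices: for every solution ρ and every pair of adjacent vertices j, l (i.e. ω_{jl} = 1), one has lim_{t→∞} θ̃(min(ρ_j(t), ρ_l(t))) · (ρ_j(t) − ρ_l(t))² = 0. -/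
theorem barbalat_aux (V V' g : ℝ → ℝ) (κ C M : ℝ) (hκ : 0 < κ) (hM : 0 < M)
    (hV : ∀ t ≥ (0:ℝ), HasDerivAt V (V' t) t) (hC : ∀ t ≥ (0:ℝ), V t ≤ C)
    (hg0 : ∀ t ≥ (0:ℝ), 0 ≤ g t) (hg : ∀ t ≥ (0:ℝ), κ * g t ≤ V' t)
    (hlip : ∀ s ≥ (0:ℝ), ∀ t ≥ (0:ℝ), |g t - g s| ≤ M * |t - s|) :
    Filter.Tendsto g Filter.atTop (nhds 0) := by
  have slope : ∀ s ≥ (0:ℝ), ∀ t, s < t → ∃ c ∈ Set.Ioo s t, V t - V s = V' c * (t - s) := by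
    intro s hs t hst
    obtain ⟨c, hc, h⟩ := exists_hasDerivAt_eq_slope V V' hst
      (fun x hx => (hV x (le_trans hs hx.1)).continuousAt.continuousWithinAt)
      (fun x hx => hV x (le_trans hs hx.1.le))
    refine ⟨c, hc, ?_⟩
    rw [h]
    have : t - s ≠ 0 := (sub_pos.2 hst).ne'
    field_simp
  have mono : ∀ s ≥ (0:ℝ), ∀ t, s ≤ t → V s ≤ V t := by
    intro s hs t hst
    rcases hst.eq_or_lt with rfl | hst
    · exact le_rfl
    obtain ⟨c, hc, h⟩ := slope s hs t hst
    have hc0 : (0:ℝ) ≤ c := le_trans hs hc.1.le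
    have h1 : 0 ≤ V' c := le_trans (mul_nonneg hκ.le (hg0 c hc0)) (hg c hc0)
    have := mul_nonneg h1 (sub_pos.2 hst).le
    linarith
  have key : ∀ η > 0, ∃ T ≥ (0:ℝ), ∀ t ≥ T, ∀ s ≥ t, V s - V t < η := by
    intro η hη
    have hbdd : BddAbove (V '' Set.Ici 0) := ⟨C, by rintro _ ⟨t, ht, rfl⟩; exact hC t ht⟩
    have hne : (V '' Set.Ici 0).Nonempty := ⟨V 0, 0, by simp, rfl⟩
    obtain ⟨_, ⟨T, hT, rfl⟩, h⟩ := exists_lt_of_lt_csSup hne (sub_lt_self (sSup (V '' Set.Ici 0)) hη)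
    refine ⟨T, hT, fun t ht s hs => ?_⟩
    have h1 := mono T hT t ht
    have hs0 : s ∈ Set.Ici (0:ℝ) := le_trans (le_trans hT ht) hs
    have h2 := le_csSup hbdd ⟨s, hs0, rfl⟩
    linarith
  rw [Metric.tendsto_atTop]
  intro ε hε
  have hδ : 0 < ε / (2 * M) := by positivity
  obtain ⟨T, hT0, hT⟩ := key (κ * (ε / 2) * (ε / (2 * M))) (by positivity)
  refine ⟨T, fun t ht => ?_⟩
  have ht0 : 0 ≤ t := le_trans hT0 ht
  rw [Real.dist_eq, sub_zero, abs_of_nonneg (hg0 t ht0)]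
  by_contra! hcon
  have h1 := hT t ht (t + ε / (2 * M)) (by linarith)
  obtain ⟨c, hc, h⟩ := slope t ht0 (t + ε / (2 * M)) (by linarith)
  have hc0 : (0:ℝ) ≤ c := le_trans ht0 hc.1.le
  have h2 := hlip t ht0 c hc0
  rw [abs_of_pos (sub_pos.2 hc.1)] at h2
  have h3 : M * (c - t) ≤ M * (ε / (2 * M)) := by
    apply mul_le_mul_of_nonneg_left _ hM.le
    linarith [hc.2]
  have h4 : M * (ε / (2 * M)) = ε / 2 := by field_simp
  have h5 : ε / 2 ≤ g c := by linarith [neg_abs_le (g c - g t)]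
  have h6 : κ * (ε / 2) ≤ V' c := le_trans (mul_le_mul_of_nonneg_left h5 hκ.le) (hg c hc0)
  have h7 := mul_le_mul_of_nonneg_right h6 hδ.le
  rw [h] at h1
  ring_nf at h1 h7
  linarith

theorem sum_sym_aux (n : ℕ) (w : Fin n → Fin n → ℝ) (hw : ∀ j l, w j l = w l j) (x : Fin n → ℝ) :
    2 * ∑ j, x j * ∑ l, w j l * (x j - x l) = ∑ j, ∑ l, w j l * (x j - x l) ^ 2 := by
  have h1 : ∑ j, x j * ∑ l, w j l * (x j - x l) = ∑ j, ∑ l, x j * (w j l * (x j - x l)) := by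
    simp_rw [Finset.mul_sum]
  have h2 : ∑ j, x j * ∑ l, w j l * (x j - x l) = ∑ j, ∑ l, x l * (w j l * (x l - x j)) := by
    rw [h1, Finset.sum_comm]
    refine Finset.sum_congr rfl fun j _ => Finset.sum_congr rfl fun l _ => ?_
    rw [hw l j]
  rw [two_mul]
  nth_rewrite 1 [h1]
  rw [h2, ← Finset.sum_add_distrib]
  refine Finset.sum_congr rfl fun j _ => ?_
  rw [← Finset.sum_add_distrib]
  refine Finset.sum_congr rfl fun l _ => ?_
  ring

/-- First-order Kuramoto model on a general graph with `n` vertices: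
for every solution and every pair of adjacent vertices `j, l` (i.e. `ω_{jl} = 1`),
`θ̃(min(ρ_j(t), ρ_l(t))) (ρ_j(t) - ρ_l(t))² → 0` as `t → ∞`. -/
theorem kuramoto_graph_edge_dissipation_vanishes
    (n : ℕ) (hn : 2 ≤ n) (κ : ℝ) (hκ : 0 < κ)
    (ω : Fin n → Fin n → ℝ)
    (hω01 : ∀ j l : Fin n, ω j l = 0 ∨ ω j l = 1)
    (hωsym : ∀ j l : Fin n, ω j l = ω l j)
    (hωdiag : ∀ j : Fin n, ω j j = 0)
    (θm : ℝ → ℝ) (L : NNReal) (hθlip : LipschitzWith L θm) (hθmono : Monotone θm)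
    (hθ0 : θm 0 = 0) (hθpos : ∀ x : ℝ, 0 < x → 0 < θm x)
    (ρ : ℝ → Fin n → ℝ)
    (hode : ∀ t ≥ (0 : ℝ), ∀ j : Fin n, HasDerivAt (fun s => ρ s j)
      (κ * ∑ l : Fin n, ω j l * θm (min (ρ t j) (ρ t l)) * (ρ t j - ρ t l)) t)
    (hrange : ∀ t ≥ (0 : ℝ), ∀ j : Fin n, ρ t j ∈ Set.Icc (0 : ℝ) 1)
    (hsum : ∀ t ≥ (0 : ℝ), ∑ j : Fin n, ρ t j = 1)
    (j l : Fin n) (hjl : ω j l = 1) :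
    Filter.Tendsto (fun t => θm (min (ρ t j) (ρ t l)) * (ρ t j - ρ t l) ^ 2)
      Filter.atTop (nhds 0) := by
  have hA : ∀ t ≥ (0:ℝ), ∀ a b, 0 ≤ θm (min (ρ t a) (ρ t b)) ∧ θm (min (ρ t a) (ρ t b)) ≤ θm 1 := by
    intro t ht a b
    constructor
    · rw [← hθ0]; exact hθmono (le_min (hrange t ht a).1 (hrange t ht b).1)
    · exact hθmono (le_trans (min_le_left _ _) (hrange t ht a).2)
  have hθ1 : 0 < θm 1 := hθpos 1 one_pos
  have hω0 : ∀ a b, 0 ≤ ω a b ∧ ω a b ≤ 1 := by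
    intro a b; rcases hω01 a b with h | h <;> rw [h] <;> norm_num
  have hD : ∀ t ≥ (0:ℝ), ∀ a b, |ρ t a - ρ t b| ≤ 1 := by
    intro t ht a b
    have h1 := hrange t ht a
    have h2 := hrange t ht b
    rw [abs_le]; constructor <;> linarith [h1.1, h1.2, h2.1, h2.2]
  set K : ℝ := κ * (n * θm 1) with hK
  have hn0 : (0:ℝ) < n := by exact_mod_cast (by omega : 0 < n)
  have hKpos : 0 < K := by positivity
  have hρlip : ∀ a, ∀ s ≥ (0:ℝ), ∀ t ≥ (0:ℝ), |ρ t a - ρ s a| ≤ K * |t - s| := by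
    intro a s hs t ht
    have := (convex_Ici (0:ℝ)).norm_image_sub_le_of_norm_hasDerivWithin_le
      (f := fun s => ρ s a) (C := K)
      (fun x hx => (hode x hx a).hasDerivWithinAt) ?_ hs ht
    · simpa [Real.norm_eq_abs] using this
    · intro x hx
      rw [Real.norm_eq_abs, abs_mul, abs_of_pos hκ]
      apply mul_le_mul_of_nonneg_left _ hκ.le
      refine le_trans (Finset.abs_sum_le_sum_abs _ _) ?_
      refine le_trans (Finset.sum_le_card_nsmul _ _ (θm 1) ?_) (by simp)
      intro b _
      rw [abs_mul, abs_mul, abs_of_nonneg (hω0 a b).1, abs_of_nonneg (hA x hx a b).1]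
      have h1 : ω a b * θm (min (ρ x a) (ρ x b)) ≤ 1 * θm 1 :=
        mul_le_mul (hω0 a b).2 (hA x hx a b).2 (hA x hx a b).1 zero_le_one
      have h2 := mul_le_mul h1 (hD x hx a b) (abs_nonneg _) (by positivity)
      linarith
  refine barbalat_aux (fun t => ∑ a, ρ t a ^ 2)
    (fun t => κ * ∑ a, ∑ b, ω a b * θm (min (ρ t a) (ρ t b)) * (ρ t a - ρ t b) ^ 2)
    _ κ n (L * K + 4 * θm 1 * K) hκ (by positivity) ?_ ?_ ?_ ?_ ?_
  · intro t ht
    have h := HasDerivAt.fun_sum (u := Finset.univ) fun a _ => (hode t ht a).fun_pow 2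
    refine h.congr_deriv ?_
    rw [← sum_sym_aux n (fun a b => ω a b * θm (min (ρ t a) (ρ t b)))
      (fun a b => by rw [hωsym, min_comm]) (ρ t), Finset.mul_sum, Finset.mul_sum]
    refine Finset.sum_congr rfl fun a _ => ?_
    simp only [Nat.cast_ofNat, Nat.add_one_sub_one, pow_one]
    ring
  · intro t ht
    refine le_trans (Finset.sum_le_card_nsmul _ _ 1 ?_) (by simp)
    intro a _
    exact pow_le_one₀ (hrange t ht a).1 (hrange t ht a).2
  · intro t ht
    exact mul_nonneg (hA t ht j l).1 (sq_nonneg _)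
  · intro t ht
    apply mul_le_mul_of_nonneg_left _ hκ.le
    have hnn : ∀ a b, 0 ≤ ω a b * θm (min (ρ t a) (ρ t b)) * (ρ t a - ρ t b) ^ 2 := fun a b =>
      mul_nonneg (mul_nonneg (hω0 a b).1 (hA t ht a b).1) (sq_nonneg _)
    have h1 := Finset.single_le_sum (f := fun b => ω j b * θm (min (ρ t j) (ρ t b)) * (ρ t j - ρ t b) ^ 2)
      (fun b _ => hnn j b) (Finset.mem_univ l)
    have h2 := Finset.single_le_sum
      (f := fun a => ∑ b, ω a b * θm (min (ρ t a) (ρ t b)) * (ρ t a - ρ t b) ^ 2)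
      (fun a _ => Finset.sum_nonneg fun b _ => hnn a b) (Finset.mem_univ j)
    simp only [hjl, one_mul] at h1
    exact le_trans h1 h2
  · intro s hs t ht
    have hj := hρlip j s hs t ht
    have hl := hρlip l s hs t ht
    have hmin : |min (ρ t j) (ρ t l) - min (ρ s j) (ρ s l)| ≤ K * |t - s| :=
      le_trans (abs_min_sub_min_le_max _ _ _ _) (max_le hj hl)
    have ha : |θm (min (ρ t j) (ρ t l)) - θm (min (ρ s j) (ρ s l))| ≤ L * (K * |t - s|) := by
      have := hθlip.dist_le_mul (min (ρ t j) (ρ t l)) (min (ρ s j) (ρ s l))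
      rw [Real.dist_eq, Real.dist_eq] at this
      exact le_trans this (mul_le_mul_of_nonneg_left hmin L.2)
    have hb : |(ρ t j - ρ t l) - (ρ s j - ρ s l)| ≤ 2 * (K * |t - s|) := by
      have := abs_sub (ρ t j - ρ s j) (ρ t l - ρ s l)
      rw [show (ρ t j - ρ t l) - (ρ s j - ρ s l) = (ρ t j - ρ s j) - (ρ t l - ρ s l) by ring]
      linarith
    have hAs := hA s hs j l
    have hDt := hD t ht j l
    have hDs := hD s hs j l
    generalize θm (min (ρ t j) (ρ t l)) = a at *
    generalize θm (min (ρ s j) (ρ s l)) = a' at *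
    generalize ρ t j - ρ t l = b at *
    generalize ρ s j - ρ s l = b' at *
    rw [show a * b ^ 2 - a' * b' ^ 2 = (a - a') * b ^ 2 + a' * ((b - b') * (b + b')) by ring]
    refine le_trans (abs_add_le _ _) ?_
    rw [abs_mul, abs_mul, abs_mul, abs_of_nonneg hAs.1, abs_of_nonneg (sq_nonneg b)]
    have e1 : b ^ 2 ≤ 1 := by rw [← sq_abs]; exact pow_le_one₀ (abs_nonneg _) hDt
    have e2 : |b + b'| ≤ 2 := le_trans (abs_add_le _ _) (by linarith)
    have f1 := mul_le_mul ha e1 (sq_nonneg b) (le_trans (abs_nonneg _) ha)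
    have f2 := mul_le_mul hb e2 (abs_nonneg _) (le_trans (abs_nonneg _) hb)
    have f3 := mul_le_mul hAs.2 f2 (by positivity) hθ1.le
    linarith
end

section
/- For the second-order Kuramoto dynamics on the two-point graph: if (r, S) : [0,∞) → ℝ² is a differentiable solution of the system, then the Hamiltonian is a constant of motion, i.e. H(r(t), S(t)) = H(r(0), S(0)) for all t ≥ 0. -/
/-- Second-order Kuramoto dynamics on the two-point graph:
`dr/dt = S θ(r)`, `dS/dt = 2κ²(2r-1)θ(r) - (1/2)(S² - κ²(2r-1)²)θ'(r)`.
The Hamiltonian `H(r,S) = (θ(r)/2)(S² - κ²(2r-1)²)` is a constant of motion. -/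
theorem two_point_hamiltonian_conserved
    (κ : ℝ) (θ : ℝ → ℝ) (hθ : ContDiff ℝ 1 θ)
    (r S : ℝ → ℝ)
    (hr : ∀ t ≥ (0 : ℝ), HasDerivAt r (S t * θ (r t)) t)
    (hS : ∀ t ≥ (0 : ℝ), HasDerivAt S
      (2 * κ ^ 2 * (2 * r t - 1) * θ (r t)
        - (1 / 2) * ((S t) ^ 2 - κ ^ 2 * (2 * r t - 1) ^ 2) * deriv θ (r t)) t) :
    ∀ t ≥ (0 : ℝ),
      θ (r t) / 2 * ((S t) ^ 2 - κ ^ 2 * (2 * r t - 1) ^ 2)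
        = θ (r 0) / 2 * ((S 0) ^ 2 - κ ^ 2 * (2 * r 0 - 1) ^ 2) := by
  have key : ∀ t ≥ (0 : ℝ), HasDerivAt
      (fun t => θ (r t) / 2 * ((S t) ^ 2 - κ ^ 2 * (2 * r t - 1) ^ 2)) 0 t := by
    intro t ht
    have h1 : HasDerivAt θ (deriv θ (r t)) (r t) :=
      ((hθ.differentiable (by norm_num)) (r t)).hasDerivAt
    have h2 : HasDerivAt (fun t => θ (r t)) (deriv θ (r t) * (S t * θ (r t))) t :=
      h1.comp t (hr t ht)
    have h3 := (((hr t ht).const_mul 2).sub_const 1).fun_pow 2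
    have h4 := (h2.div_const 2).fun_mul (((hS t ht).fun_pow 2).fun_sub (h3.const_mul (κ ^ 2)))
    refine h4.congr_deriv ?_
    norm_num
    ring
  intro t ht
  refine constant_of_has_deriv_right_zero (a := 0) (b := t)
    (f := fun t => θ (r t) / 2 * ((S t) ^ 2 - κ ^ 2 * (2 * r t - 1) ^ 2)) ?_ ?_ t ⟨ht, le_rfl⟩
  · exact fun x hx => (key x hx.1).continuousAt.continuousWithinAt
  · exact fun x hx => (key x hx.1).hasDerivWithinAt
end

section
/- For the second-order Kuramoto dynamics on the two-point graph, assume additionally that θ ≥ 0 and θ(x) > 0 if and only if 0 < x < 1. Let (r, S) : [0,∞) → ℝ² be a differentiable solution whose initial data satisfy S(0) > 0 and H₀ := H(r(0), S(0)) > 0. Then for all t ≥ 0: S(t) > 0, r(t) ∈ (0,1), r is strictly increasing (dr/dt (t) > 0), and lim_{t→∞} r(t) = 1. -/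
/-- Second-order Kuramoto dynamics on the two-point graph, with
`θ ≥ 0` and `θ(x) > 0 ↔ 0 < x < 1`.  If the initial data satisfy `S(0) > 0` and
`H₀ = H(r(0), S(0)) > 0`, then for all `t ≥ 0`: `S(t) > 0`, `r(t) ∈ (0,1)`, and
`dr/dt(t) = S(t)θ(r(t)) > 0` (so `r` is strictly increasing); moreover `r(t) → 1`
as `t → ∞`. -/
theorem two_point_second_order_convergence
    (κ : ℝ) (θ : ℝ → ℝ) (hθ : ContDiff ℝ 1 θ)
    (hθnn : ∀ x : ℝ, 0 ≤ θ x)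
    (hθpos : ∀ x : ℝ, 0 < θ x ↔ (0 < x ∧ x < 1))
    (r S : ℝ → ℝ)
    (hr : ∀ t ≥ (0 : ℝ), HasDerivAt r (S t * θ (r t)) t)
    (hS : ∀ t ≥ (0 : ℝ), HasDerivAt S
      (2 * κ ^ 2 * (2 * r t - 1) * θ (r t)
        - (1 / 2) * ((S t) ^ 2 - κ ^ 2 * (2 * r t - 1) ^ 2) * deriv θ (r t)) t)
    (hS0 : 0 < S 0)
    (hH0 : 0 < θ (r 0) / 2 * ((S 0) ^ 2 - κ ^ 2 * (2 * r 0 - 1) ^ 2)) :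
    (∀ t ≥ (0 : ℝ), 0 < S t ∧ r t ∈ Set.Ioo (0 : ℝ) 1 ∧ 0 < S t * θ (r t)) ∧
    Filter.Tendsto r Filter.atTop (nhds 1) := by
  have hd : ∀ x, HasDerivAt θ (deriv θ x) x := fun x =>
    ((hθ.differentiable (by norm_num)) x).hasDerivAt
  have hHd : ∀ t ≥ (0 : ℝ), HasDerivAt
      (fun t => θ (r t) / 2 * ((S t) ^ 2 - κ ^ 2 * (2 * r t - 1) ^ 2)) 0 t := by
    intro t ht
    have h1 : HasDerivAt (fun t => θ (r t)) (deriv θ (r t) * (S t * θ (r t))) t :=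
      (hd (r t)).comp t (hr t ht)
    have h2 := (hS t ht).fun_pow 2
    have h3 := (((((hr t ht).const_mul 2).sub_const 1).fun_pow 2).const_mul (κ ^ 2))
    refine ((h1.div_const 2).mul (h2.sub h3)).congr_deriv ?_
    simp
    ring
  have hH : ∀ t ≥ (0 : ℝ), θ (r t) / 2 * ((S t) ^ 2 - κ ^ 2 * (2 * r t - 1) ^ 2)
      = θ (r 0) / 2 * ((S 0) ^ 2 - κ ^ 2 * (2 * r 0 - 1) ^ 2) := by
    intro t ht
    refine constant_of_has_deriv_right_zero
      (f := fun t => θ (r t) / 2 * ((S t) ^ 2 - κ ^ 2 * (2 * r t - 1) ^ 2))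
      (a := 0) (b := t) ?_ ?_ t ⟨ht, le_rfl⟩
    · intro x hx
      exact (hHd x hx.1).continuousAt.continuousWithinAt
    · intro x hx
      exact (hHd x hx.1).hasDerivWithinAt
  set H0 := θ (r 0) / 2 * ((S 0) ^ 2 - κ ^ 2 * (2 * r 0 - 1) ^ 2) with hH0def
  have hθr : ∀ t ≥ (0 : ℝ), 0 < θ (r t) := by
    intro t ht
    rcases (hθnn (r t)).lt_or_eq with h | h
    · exact h
    · have := hH t ht
      rw [← h] at this
      simp at this
      linarith
  have hE : ∀ t ≥ (0 : ℝ), 2 * H0 ≤ θ (r t) * (S t) ^ 2 := by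
    intro t ht
    have h1 := hH t ht
    have h2 : 0 ≤ θ (r t) * (κ ^ 2 * (2 * r t - 1) ^ 2) :=
      mul_nonneg (hθnn _) (by positivity)
    linarith
  have hSne : ∀ t ≥ (0 : ℝ), S t ≠ 0 := by
    intro t ht h
    have := hE t ht
    rw [h] at this
    norm_num at this
    linarith
  have hSpos : ∀ t ≥ (0 : ℝ), 0 < S t := by
    intro t ht
    by_contra hc
    have hcont : ContinuousOn S (Set.Icc 0 t) := fun x hx =>
      (hS x hx.1).continuousAt.continuousWithinAt
    obtain ⟨x, hx, hx0⟩ := intermediate_value_Icc' ht hcont ⟨not_lt.mp hc, hS0.le⟩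
    exact hSne x hx.1 hx0
  have hrI : ∀ t ≥ (0 : ℝ), r t ∈ Set.Ioo (0 : ℝ) 1 := fun t ht =>
    (hθpos _).1 (hθr t ht)
  refine ⟨fun t ht => ⟨hSpos t ht, hrI t ht, mul_pos (hSpos t ht) (hθr t ht)⟩, ?_⟩
  have hrc : ContinuousOn r (Set.Ici 0) := fun x hx =>
    (hr x hx).continuousAt.continuousWithinAt
  have hmono : MonotoneOn r (Set.Ici 0) := by
    refine monotoneOn_of_deriv_nonneg (convex_Ici 0) hrc ?_ ?_
    · intro x hx
      rw [interior_Ici] at hx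
      exact (hr x (le_of_lt hx)).differentiableAt.differentiableWithinAt
    · intro x hx
      rw [interior_Ici] at hx
      have hx' : x ≥ 0 := le_of_lt hx
      rw [(hr x hx').deriv]
      exact (mul_pos (hSpos x hx') (hθr x hx')).le
  have key : ∀ a < (1 : ℝ), ∃ t ≥ (0 : ℝ), a < r t := by
    intro a ha
    by_contra! hcon
    have hr0 := hrI 0 le_rfl
    obtain ⟨m, hm, hmin⟩ := isCompact_Icc.exists_isMinOn
      (Set.nonempty_Icc.2 (hcon 0 le_rfl)) (hθ.continuous.continuousOn (s := Set.Icc (r 0) a))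
    have hmpos : 0 < θ m := (hθpos m).2 ⟨hr0.1.trans_le hm.1, hm.2.trans_lt ha⟩
    have hcpos : 0 < Real.sqrt (2 * H0 * θ m) := Real.sqrt_pos.2 (by positivity)
    set c := Real.sqrt (2 * H0 * θ m) with hc
    have hlow : ∀ t ≥ (0 : ℝ), c ≤ S t * θ (r t) := by
      intro t ht
      have hp := mul_pos (hSpos t ht) (hθr t ht)
      rw [hc]
      refine Real.sqrt_le_iff.2 ⟨hp.le, ?_⟩
      have h1 : θ m ≤ θ (r t) := hmin ⟨hmono (Set.mem_Ici.2 le_rfl) ht ht, hcon t ht⟩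
      calc 2 * H0 * θ m ≤ (θ (r t) * (S t) ^ 2) * θ (r t) :=
            mul_le_mul (hE t ht) h1 hmpos.le (by have := hθnn (r t); positivity)
        _ = (S t * θ (r t)) ^ 2 := by ring
    have hT : (0 : ℝ) ≤ 1 / c := by positivity
    have := (convex_Ici (0 : ℝ)).mul_sub_le_image_sub_of_le_deriv hrc (C := c)
      (by
        intro x hx
        rw [interior_Ici] at hx
        exact (hr x (le_of_lt hx)).differentiableAt.differentiableWithinAt)
      (by
        intro x hx
        rw [interior_Ici] at hx
        rw [(hr x (le_of_lt hx)).deriv]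
        exact hlow x (le_of_lt hx)) 0 (Set.mem_Ici.2 le_rfl) (1 / c) hT hT
    have h2 := hrI (1 / c) hT
    have h3 : c * (1 / c - 0) = 1 := by field_simp; simp
    linarith [h2.2, hr0.1]
  refine tendsto_order.2 ⟨fun a ha => ?_, fun a ha => ?_⟩
  · obtain ⟨t, ht, hat⟩ := key a ha
    filter_upwards [Filter.eventually_ge_atTop t] with x hx
    exact hat.trans_le (hmono ht (Set.mem_Ici.2 (le_trans ht hx)) hx)
  · filter_upwards [Filter.eventually_ge_atTop 0] with x hx
    exact (hrI x hx).2.trans ha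
end

section
/- Hopf–Cole transform on a finite graph: let (ρ, S) : [0,∞) → ℝ^n × ℝ^n be a differentiable solution of the discrete Wasserstein Hamiltonian system, and define ξ_j(t) = (1/2)(∂_jF(ρ(t)) + S_j(t)) and ξ*_j(t) = (1/2)(∂_jF(ρ(t)) − S_j(t)). Then for all t ≥ 0 and all j: dξ_j/dt = Σ_{k,l=1}^n ∂²_{jk}F(ρ) · ω_{kl} · θ_{kl} · (ξ_k − ξ_l) + Σ_{l=1}^n ω_{jl} · (ξ*_l − ξ*_j)(ξ_l − ξ_j) · (∂₁θ)(ρ_j, ρ_l), and dξ*_j/dt = −Σ_{k,l=1}^n ∂²_{jk}F(ρ) · ω_{kl} · θ_{kl} · (ξ*_k − ξ*_l) − Σ_{l=1}^n ω_{jl} · (ξ*_l − ξ*_j)(ξ_l − ξ_j) · (∂₁θ)(ρ_j, ρ_l). -/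
/-- Partial derivative `∂F/∂ρ_j` of a function `F : ℝⁿ → ℝ`, as the Fréchet derivative
applied to the `j`-th coordinate direction. -/
noncomputable def partialD {n : ℕ} (F : (Fin n → ℝ) → ℝ) (j : Fin n)
    (ρ : Fin n → ℝ) : ℝ :=
  fderiv ℝ F ρ (Pi.single j 1)

/-- Partial derivative of `θ : ℝ² → ℝ` in its first argument. -/
noncomputable def d1 (θ : ℝ → ℝ → ℝ) (a b : ℝ) : ℝ :=
  deriv (fun x => θ x b) a


lemma partialD_contDiff {n : ℕ} {F : (Fin n → ℝ) → ℝ} (hF : ContDiff ℝ 2 F) (j : Fin n) :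
    ContDiff ℝ 1 (partialD F j) := by
  unfold partialD
  exact (hF.fderiv_right (m := 1) (by norm_num)).clm_apply contDiff_const

lemma partialD_symm {n : ℕ} {F : (Fin n → ℝ) → ℝ} (hF : ContDiff ℝ 2 F) (j k : Fin n)
    (x : Fin n → ℝ) : partialD (partialD F k) j x = partialD (partialD F j) k x := by
  have h1 : Differentiable ℝ (fderiv ℝ F) :=
    (hF.fderiv_right (m := 1) (by norm_num)).differentiable (by norm_num)
  have key : ∀ a b : Fin n, partialD (partialD F a) b x
      = fderiv ℝ (fderiv ℝ F) x (Pi.single b 1) (Pi.single a 1) := by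
    intro a b
    have : HasFDerivAt (partialD F a)
        ((fderiv ℝ (fderiv ℝ F) x).flip (Pi.single a 1)) x := by
      have := (h1 x).hasFDerivAt.clm_apply (hasFDerivAt_const (Pi.single a (1 : ℝ)) x)
      have h3 : HasFDerivAt (fun y => fderiv ℝ F y (Pi.single a 1))
        ((fderiv ℝ (fderiv ℝ F) x).flip (Pi.single a 1)) x := by
        refine this.congr_fderiv ?_
        simp
      exact h3
    rw [partialD, this.fderiv]
    rfl
  rw [key, key]
  exact (hF.contDiffAt.isSymmSndFDerivAt (by simp)).eq _ _

lemma hasDerivAt_comp_partialD {n : ℕ} {G : (Fin n → ℝ) → ℝ} (c : ℝ → Fin n → ℝ)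
    (v : Fin n → ℝ) (t : ℝ) (hG : DifferentiableAt ℝ G (c t))
    (hc : ∀ k, HasDerivAt (fun s => c s k) (v k) t) :
    HasDerivAt (fun s => G (c s)) (∑ k, partialD G k (c t) * v k) t := by
  have h := hG.hasFDerivAt.comp_hasDerivAt t (hasDerivAt_pi.2 hc)
  refine HasDerivAt.congr_deriv (f := fun s => G (c s)) h ?_
  conv_lhs => rw [show v = ∑ k, v k • (Pi.single k (1 : ℝ) : Fin n → ℝ) by
    ext i; simp [Finset.sum_apply, Pi.single_apply]]
  simp [partialD, mul_comm]

lemma theta_deriv {θ : ℝ → ℝ → ℝ} (hθ : ContDiff ℝ 1 (fun p : ℝ × ℝ => θ p.1 p.2))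
    (hθsym : ∀ a b : ℝ, θ a b = θ b a) {f g : ℝ → ℝ} {f' g' t : ℝ}
    (hf : HasDerivAt f f' t) (hg : HasDerivAt g g' t) :
    HasDerivAt (fun s => θ (f s) (g s))
      (d1 θ (f t) (g t) * f' + d1 θ (g t) (f t) * g') t := by
  have hd : Differentiable ℝ (fun p : ℝ × ℝ => θ p.1 p.2) := hθ.differentiable (by norm_num)
  set L := fderiv ℝ (fun p : ℝ × ℝ => θ p.1 p.2) (f t, g t) with hL
  have hfd : HasFDerivAt (fun p : ℝ × ℝ => θ p.1 p.2) L (f t, g t) := (hd _).hasFDerivAt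
  have e1 : d1 θ (f t) (g t) = L (1, 0) := by
    unfold d1
    exact (hfd.comp_hasDerivAt (f t) ((hasDerivAt_id (f t)).prodMk
      (hasDerivAt_const (f t) (g t)))).deriv
  have e2 : d1 θ (g t) (f t) = L (0, 1) := by
    have : d1 θ (g t) (f t) = deriv (fun x => θ (f t) x) (g t) := by
      unfold d1
      congr 1
      funext x
      exact hθsym _ _
    rw [this]
    exact (hfd.comp_hasDerivAt (g t) ((hasDerivAt_const (g t) (f t)).prodMk
      (hasDerivAt_id (g t)))).deriv
  have h := hfd.comp_hasDerivAt t (hf.prodMk hg)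
  refine HasDerivAt.congr_deriv (f := fun s => θ (f s) (g s)) h ?_
  rw [e1, e2, show ((f', g') : ℝ × ℝ) = f' • ((1 : ℝ), (0 : ℝ)) + g' • ((0 : ℝ), (1 : ℝ)) by simp,
    map_add, map_smul, map_smul]
  simp [mul_comm]

lemma partialD_energy {n : ℕ} (ω : Fin n → Fin n → ℝ)
    (hωsym : ∀ j l : Fin n, ω j l = ω l j)
    (F : (Fin n → ℝ) → ℝ) (hF : ContDiff ℝ 2 F)
    (θ : ℝ → ℝ → ℝ) (hθ : ContDiff ℝ 1 (fun p : ℝ × ℝ => θ p.1 p.2))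
    (hθsym : ∀ a b : ℝ, θ a b = θ b a) (j : Fin n) (x : Fin n → ℝ) :
    partialD (fun σ => (1 / 4) * ∑ k : Fin n, ∑ l : Fin n,
            ω k l * (partialD F k σ - partialD F l σ) ^ 2 * θ (σ k) (σ l)) j x
    = (∑ k : Fin n, ∑ l : Fin n,
        partialD (partialD F j) k x * ω k l * θ (x k) (x l) * (partialD F k x - partialD F l x))
      + (1 / 2) * ∑ l : Fin n, ω j l * (partialD F j x - partialD F l x) ^ 2
          * d1 θ (x j) (x l) := by
  set G : (Fin n → ℝ) → ℝ := fun σ => (1 / 4) * ∑ k : Fin n, ∑ l : Fin n,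
            ω k l * (partialD F k σ - partialD F l σ) ^ 2 * θ (σ k) (σ l) with hGdef
  have hp : ∀ k, Differentiable ℝ (partialD F k) := fun k =>
    (partialD_contDiff hF k).differentiable (by norm_num)
  have hd : Differentiable ℝ (fun p : ℝ × ℝ => θ p.1 p.2) := hθ.differentiable (by norm_num)
  have hθ' : ∀ k l : Fin n, Differentiable ℝ (fun σ : Fin n → ℝ => θ (σ k) (σ l)) := by
    intro k l
    exact hd.comp (g := fun p : ℝ × ℝ => θ p.1 p.2) (f := fun σ : Fin n → ℝ => (σ k, σ l))
      (by fun_prop)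
  have hG : Differentiable ℝ G := by
    rw [hGdef]
    fun_prop
  set e : Fin n → ℝ := Pi.single j 1 with he
  let c : ℝ → Fin n → ℝ := fun s k => x k + s * e k
  have hc0 : c 0 = x := by funext k; simp [c]
  have hc : ∀ k, HasDerivAt (fun s => c s k) (e k) 0 := by
    intro k
    simpa [c] using ((hasDerivAt_id (0 : ℝ)).mul_const (e k)).const_add (x k)
  have sumE : ∀ a : Fin n → ℝ, ∑ k, a k * e k = a j := by
    intro a; simp [he, Pi.single_apply]
  have hP : ∀ (H : (Fin n → ℝ) → ℝ), Differentiable ℝ H →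
      HasDerivAt (fun s => H (c s)) (partialD H j x) 0 := by
    intro H hH
    have := hasDerivAt_comp_partialD c e 0 (hH _) hc
    rwa [sumE, hc0] at this
  have h1 := hP G hG
  have h2 : HasDerivAt (fun s => G (c s)) ((1 / 4) * ∑ k : Fin n, ∑ l : Fin n,
      (ω k l * (2 * (partialD F k x - partialD F l x)
          * (partialD (partialD F j) k x - partialD (partialD F j) l x)) * θ (x k) (x l)
        + ω k l * (partialD F k x - partialD F l x) ^ 2
          * (d1 θ (x k) (x l) * e k + d1 θ (x l) (x k) * e l))) 0 := by
    rw [hGdef]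
    refine HasDerivAt.const_mul _ (HasDerivAt.fun_sum fun k _ => HasDerivAt.fun_sum fun l _ => ?_)
    have a := (((hP _ (hp k)).sub (hP _ (hp l))).pow 2).const_mul (ω k l)
    have b := theta_deriv hθ hθsym (hc k) (hc l)
    have m := a.mul b
    refine m.congr_deriv ?_
    simp [hc0, partialD_symm hF j]
  rw [h1.unique h2]
  have A : ∑ k : Fin n, ∑ l : Fin n, ω k l * (partialD F k x - partialD F l x)
        * partialD (partialD F j) l x * θ (x k) (x l)
      = -∑ k : Fin n, ∑ l : Fin n, partialD (partialD F j) k x * ω k l * θ (x k) (x l)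
        * (partialD F k x - partialD F l x) := by
    rw [Finset.sum_comm, ← Finset.sum_neg_distrib]
    refine Finset.sum_congr rfl fun k _ => ?_
    rw [← Finset.sum_neg_distrib]
    refine Finset.sum_congr rfl fun l _ => ?_
    rw [hωsym l k, hθsym (x l) (x k)]
    ring
  have B : ∑ k : Fin n, ∑ l : Fin n, ω k l * (partialD F k x - partialD F l x) ^ 2
        * d1 θ (x k) (x l) * e k
      = ∑ l : Fin n, ω j l * (partialD F j x - partialD F l x) ^ 2 * d1 θ (x j) (x l) := by
    rw [← sumE (fun k => ∑ l : Fin n, ω k l * (partialD F k x - partialD F l x) ^ 2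
        * d1 θ (x k) (x l))]
    simp only [Finset.sum_mul]
  have C : ∑ k : Fin n, ∑ l : Fin n, ω k l * (partialD F k x - partialD F l x) ^ 2
        * d1 θ (x l) (x k) * e l
      = ∑ l : Fin n, ω j l * (partialD F j x - partialD F l x) ^ 2 * d1 θ (x j) (x l) := by
    rw [← B, Finset.sum_comm]
    refine Finset.sum_congr rfl fun k _ => Finset.sum_congr rfl fun l _ => ?_
    rw [hωsym l k]
    ring
  have D : ∑ k : Fin n, ∑ l : Fin n,
      (ω k l * (2 * (partialD F k x - partialD F l x)
          * (partialD (partialD F j) k x - partialD (partialD F j) l x)) * θ (x k) (x l)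
        + ω k l * (partialD F k x - partialD F l x) ^ 2
          * (d1 θ (x k) (x l) * e k + d1 θ (x l) (x k) * e l))
      = 2 * (∑ k : Fin n, ∑ l : Fin n, partialD (partialD F j) k x * ω k l * θ (x k) (x l)
        * (partialD F k x - partialD F l x))
      - 2 * (∑ k : Fin n, ∑ l : Fin n, ω k l * (partialD F k x - partialD F l x)
        * partialD (partialD F j) l x * θ (x k) (x l))
      + (∑ k : Fin n, ∑ l : Fin n, ω k l * (partialD F k x - partialD F l x) ^ 2
        * d1 θ (x k) (x l) * e k)
      + ∑ k : Fin n, ∑ l : Fin n, ω k l * (partialD F k x - partialD F l x) ^ 2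
        * d1 θ (x l) (x k) * e l := by
    simp only [Finset.mul_sum, ← Finset.sum_sub_distrib, ← Finset.sum_add_distrib]
    refine Finset.sum_congr rfl fun k _ => Finset.sum_congr rfl fun l _ => ?_
    ring
  rw [D, A, B, C]
  ring

/-- **Hopf–Cole transform on a finite graph.**  For a solution `(ρ, S)`
of the discrete Wasserstein Hamiltonian system with potential `F`, weights `ω` and
probability weight `θ`, the transformed variables `ξ_j = (∂_jF(ρ) + S_j)/2`,
`ξ*_j = (∂_jF(ρ) - S_j)/2` satisfy the transformed Hopf–Cole dynamics. -/
theorem hopf_cole_transform_on_graph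
    (n : ℕ) (hn : 2 ≤ n)
    (ω : Fin n → Fin n → ℝ)
    (hωsym : ∀ j l : Fin n, ω j l = ω l j)
    (hωdiag : ∀ j : Fin n, ω j j = 0)
    (F : (Fin n → ℝ) → ℝ) (hF : ContDiff ℝ 2 F)
    (θ : ℝ → ℝ → ℝ) (hθ : ContDiff ℝ 1 (fun p : ℝ × ℝ => θ p.1 p.2))
    (hθsym : ∀ a b : ℝ, θ a b = θ b a)
    (ρ S : ℝ → Fin n → ℝ)
    (hρ : ∀ t ≥ (0 : ℝ), ∀ j : Fin n, HasDerivAt (fun s => ρ s j)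
      (∑ l : Fin n, ω j l * (S t j - S t l) * θ (ρ t j) (ρ t l)) t)
    (hS : ∀ t ≥ (0 : ℝ), ∀ j : Fin n, HasDerivAt (fun s => S s j)
      (-(1 / 2) * ∑ l : Fin n, ω j l * (S t j - S t l) ^ 2 * d1 θ (ρ t j) (ρ t l)
        + partialD (fun σ => (1 / 4) * ∑ k : Fin n, ∑ l : Fin n,
            ω k l * (partialD F k σ - partialD F l σ) ^ 2 * θ (σ k) (σ l)) j (ρ t)) t)
    (ξ ξs : ℝ → Fin n → ℝ)
    (hξ : ∀ t : ℝ, ∀ j : Fin n, ξ t j = (partialD F j (ρ t) + S t j) / 2)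
    (hξs : ∀ t : ℝ, ∀ j : Fin n, ξs t j = (partialD F j (ρ t) - S t j) / 2) :
    ∀ t ≥ (0 : ℝ), ∀ j : Fin n,
      HasDerivAt (fun s => ξ s j)
        ((∑ k : Fin n, ∑ l : Fin n,
            partialD (partialD F j) k (ρ t) * ω k l * θ (ρ t k) (ρ t l) * (ξ t k - ξ t l))
          + ∑ l : Fin n,
              ω j l * (ξs t l - ξs t j) * (ξ t l - ξ t j) * d1 θ (ρ t j) (ρ t l)) t ∧
      HasDerivAt (fun s => ξs s j)
        (-(∑ k : Fin n, ∑ l : Fin n,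
            partialD (partialD F j) k (ρ t) * ω k l * θ (ρ t k) (ρ t l) * (ξs t k - ξs t l))
          - ∑ l : Fin n,
              ω j l * (ξs t l - ξs t j) * (ξ t l - ξ t j) * d1 θ (ρ t j) (ρ t l)) t := by
  intro t ht j
  have hp : Differentiable ℝ (partialD F j) :=
    (partialD_contDiff hF j).differentiable (by norm_num)
  have h1 := hasDerivAt_comp_partialD ρ _ t (hp _) (hρ t ht)
  have h2 := hS t ht j
  rw [partialD_energy ω hωsym F hF θ hθ hθsym] at h2
  have E1 : ∑ k : Fin n, partialD (partialD F j) k (ρ t)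
        * ∑ l : Fin n, ω k l * (S t k - S t l) * θ (ρ t k) (ρ t l)
      = (∑ k : Fin n, ∑ l : Fin n,
            partialD (partialD F j) k (ρ t) * ω k l * θ (ρ t k) (ρ t l) * (ξ t k - ξ t l))
        - ∑ k : Fin n, ∑ l : Fin n,
            partialD (partialD F j) k (ρ t) * ω k l * θ (ρ t k) (ρ t l) * (ξs t k - ξs t l) := by
    simp only [Finset.mul_sum, ← Finset.sum_sub_distrib]
    refine Finset.sum_congr rfl fun k _ => Finset.sum_congr rfl fun l _ => ?_
    simp only [hξ, hξs]
    ring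
  have E2 : ∑ k : Fin n, ∑ l : Fin n, partialD (partialD F j) k (ρ t) * ω k l
        * θ (ρ t k) (ρ t l) * (partialD F k (ρ t) - partialD F l (ρ t))
      = (∑ k : Fin n, ∑ l : Fin n,
            partialD (partialD F j) k (ρ t) * ω k l * θ (ρ t k) (ρ t l) * (ξ t k - ξ t l))
        + ∑ k : Fin n, ∑ l : Fin n,
            partialD (partialD F j) k (ρ t) * ω k l * θ (ρ t k) (ρ t l) * (ξs t k - ξs t l) := by
    simp only [← Finset.sum_add_distrib]
    refine Finset.sum_congr rfl fun k _ => Finset.sum_congr rfl fun l _ => ?_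
    simp only [hξ, hξs]
    ring
  have E3 : ∑ l : Fin n, ω j l * (partialD F j (ρ t) - partialD F l (ρ t)) ^ 2
        * d1 θ (ρ t j) (ρ t l)
      = (∑ l : Fin n, ω j l * (S t j - S t l) ^ 2 * d1 θ (ρ t j) (ρ t l))
        + 4 * ∑ l : Fin n,
              ω j l * (ξs t l - ξs t j) * (ξ t l - ξ t j) * d1 θ (ρ t j) (ρ t l) := by
    simp only [Finset.mul_sum, ← Finset.sum_add_distrib]
    refine Finset.sum_congr rfl fun l _ => ?_
    simp only [hξ, hξs]
    ring
  rw [E1] at h1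
  rw [E2, E3] at h2
  constructor
  · rw [show (fun s => ξ s j) = fun s => (partialD F j (ρ s) + S s j) / 2 from
      funext fun s => hξ s j]
    refine ((h1.add h2).div_const 2).congr_deriv ?_
    ring
  · rw [show (fun s => ξs s j) = fun s => (partialD F j (ρ s) - S s j) / 2 from
      funext fun s => hξs s j]
    refine ((h1.sub h2).div_const 2).congr_deriv ?_
    ring
end

section
/- Let (ξ, ξ*) : [0,∞) → ℝ^n × ℝ^n be differentiable and let ρ : [0,∞) → ℝ^n be continuous, such that (ξ, ξ*) solve the transformed Hopf–Cole system dξ_j/dt = Σ_{k,l=1}^n ∂²_{jk}F(ρ) · ω_{kl} · θ_{kl} · (ξ_k − ξ_l) + Σ_{l=1}^n ω_{jl} · (ξ*_l − ξ*_j)(ξ_l − ξ_j) · (∂₁θ)(ρ_j, ρ_l) and dξ*_j/dt = −Σ_{k,l=1}^n ∂²_{jk}F(ρ) · ω_{kl} · θ_{kl} · (ξ*_k − ξ*_l) − Σ_{l=1}^n ω_{jl} · (ξ*_l − ξ*_j)(ξ_l − ξ_j) · (∂₁θ)(ρ_j, ρ_l). If ξ_j(0) = 0 for all j = 1,…,n,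 then ξ_j(t) = 0 for all j and all t ≥ 0, and ξ* satisfies the reduced linear dynamics dξ*_j/dt = −Σ_{k,l=1}^n ∂²_{jk}F(ρ) · ω_{kl} · θ_{kl} · (ξ*_k − ξ*_l). -/
theorem continuous_partialD2 {n : ℕ} {F : (Fin n → ℝ) → ℝ} (hF : ContDiff ℝ 2 F)
    (j k : Fin n) : Continuous (partialD (partialD F j) k) := by
  have h1 : ContDiff ℝ 1 (partialD F j) := by
    unfold partialD
    exact (hF.fderiv_right (m := 1) (by norm_num)).clm_apply contDiff_const
  unfold partialD at h1 ⊢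
  exact (h1.continuous_fderiv (by norm_num)).clm_apply continuous_const

theorem continuous_d1 {θ : ℝ → ℝ → ℝ} (hθ : ContDiff ℝ 1 (fun p : ℝ × ℝ => θ p.1 p.2)) :
    Continuous (fun p : ℝ × ℝ => d1 θ p.1 p.2) := by
  have h : (fun p : ℝ × ℝ => d1 θ p.1 p.2) =
      fun p => fderiv ℝ (fun p : ℝ × ℝ => θ p.1 p.2) p (1, 0) := by
    funext p
    have hd := (hθ.differentiable (by norm_num) p).hasFDerivAt
    have h2 : HasDerivAt (fun x : ℝ => (x, p.2)) ((1 : ℝ), (0 : ℝ)) p.1 :=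
      (hasDerivAt_id p.1).prodMk (hasDerivAt_const p.1 p.2)
    exact (HasFDerivAt.comp_hasDerivAt (x := p.1) (l := fun p : ℝ × ℝ => θ p.1 p.2) hd h2).deriv
  rw [h]
  exact (hθ.continuous_fderiv (by norm_num)).clm_apply continuous_const

/-- If `(ξ, ξ*)` solves the transformed Hopf–Cole system along a
continuous curve `ρ` and `ξ(0) = 0`, then `ξ(t) = 0` for all `t ≥ 0`, and `ξ*`
satisfies the reduced linear dynamics
`dξ*_j/dt = -Σ_{k,l} ∂²_{jk}F(ρ) ω_{kl} θ_{kl} (ξ*_k - ξ*_l)`. -/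
theorem hopf_cole_xi_vanishes
    (n : ℕ) (hn : 2 ≤ n)
    (ω : Fin n → Fin n → ℝ)
    (hωsym : ∀ j l : Fin n, ω j l = ω l j)
    (hωdiag : ∀ j : Fin n, ω j j = 0)
    (F : (Fin n → ℝ) → ℝ) (hF : ContDiff ℝ 2 F)
    (θ : ℝ → ℝ → ℝ) (hθ : ContDiff ℝ 1 (fun p : ℝ × ℝ => θ p.1 p.2))
    (hθsym : ∀ a b : ℝ, θ a b = θ b a)
    (ρ : ℝ → Fin n → ℝ) (hρcont : Continuous ρ)
    (ξ ξs : ℝ → Fin n → ℝ)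
    (hξ : ∀ t ≥ (0 : ℝ), ∀ j : Fin n, HasDerivAt (fun s => ξ s j)
      ((∑ k : Fin n, ∑ l : Fin n,
          partialD (partialD F j) k (ρ t) * ω k l * θ (ρ t k) (ρ t l) * (ξ t k - ξ t l))
        + ∑ l : Fin n,
            ω j l * (ξs t l - ξs t j) * (ξ t l - ξ t j) * d1 θ (ρ t j) (ρ t l)) t)
    (hξs : ∀ t ≥ (0 : ℝ), ∀ j : Fin n, HasDerivAt (fun s => ξs s j)
      (-(∑ k : Fin n, ∑ l : Fin n,
          partialD (partialD F j) k (ρ t) * ω k l * θ (ρ t k) (ρ t l) * (ξs t k - ξs t l))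
        - ∑ l : Fin n,
            ω j l * (ξs t l - ξs t j) * (ξ t l - ξ t j) * d1 θ (ρ t j) (ρ t l)) t)
    (hξ0 : ∀ j : Fin n, ξ 0 j = 0) :
    (∀ t ≥ (0 : ℝ), ∀ j : Fin n, ξ t j = 0) ∧
    (∀ t ≥ (0 : ℝ), ∀ j : Fin n, HasDerivAt (fun s => ξs s j)
      (-(∑ k : Fin n, ∑ l : Fin n,
          partialD (partialD F j) k (ρ t) * ω k l * θ (ρ t k) (ρ t l)
            * (ξs t k - ξs t l))) t) := by
  have key : ∀ t ≥ (0 : ℝ), ∀ j : Fin n, ξ t j = 0 := by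
    intro T hT
    have hP := fun j k => continuous_partialD2 hF j k
    have hD := continuous_d1 hθ
    have hθc := hθ.continuous
    have hρj : ∀ j, Continuous fun t => ρ t j := fun j => (continuous_apply j).comp hρcont
    have hξsc : ∀ j, ContinuousOn (fun t => ξs t j) (Set.Icc 0 T) := fun j t ht =>
      (hξs t ht.1 j).continuousAt.continuousWithinAt
    have hξc : ContinuousOn ξ (Set.Icc 0 T) := continuousOn_pi.2 fun j t ht =>
      (hξ t ht.1 j).continuousAt.continuousWithinAt
    let g : Fin n → ℝ → ℝ := fun j t =>
      (∑ k : Fin n, ∑ l : Fin n,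
          |partialD (partialD F j) k (ρ t) * ω k l * θ (ρ t k) (ρ t l)| * 2)
        + ∑ l : Fin n, |ω j l * (ξs t l - ξs t j) * d1 θ (ρ t j) (ρ t l)| * 2
    have hg : ∀ j, ContinuousOn (g j) (Set.Icc 0 T) := by
      intro j
      refine ContinuousOn.add ?_ ?_
      · refine continuousOn_finsetSum _ fun k _ => continuousOn_finsetSum _ fun l _ => ?_
        refine Continuous.continuousOn ?_
        have h1 : Continuous fun t => partialD (partialD F j) k (ρ t) := (hP j k).comp hρcont
        have h2 : Continuous fun t => θ (ρ t k) (ρ t l) := hθc.comp ((hρj k).prodMk (hρj l))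
        exact (((h1.mul continuous_const).mul h2).abs).mul continuous_const
      · refine continuousOn_finsetSum _ fun l _ => ?_
        have h2 : Continuous fun t => d1 θ (ρ t j) (ρ t l) := hD.comp ((hρj j).prodMk (hρj l))
        exact (((continuousOn_const.mul ((hξsc l).sub (hξsc j))).mul h2.continuousOn).abs).mul
          continuousOn_const
    have hg0 : ∀ j t, 0 ≤ g j t := fun j t => by positivity
    obtain ⟨K, hK⟩ := (isCompact_Icc (a := (0 : ℝ)) (b := T)).bddAbove_image
      (continuousOn_finsetSum Finset.univ fun j _ => hg j)
    have hgK : ∀ t ∈ Set.Icc 0 T, ∀ j, g j t ≤ K := fun t ht j =>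
      (Finset.single_le_sum (f := fun j => g j t) (fun i _ => hg0 i t) (Finset.mem_univ j)).trans
        (hK (Set.mem_image_of_mem _ ht))
    have j0 : Fin n := ⟨0, by omega⟩
    have hK0 : 0 ≤ K := (hg0 j0 0).trans (hgK 0 ⟨le_rfl, hT⟩ j0)
    have hz := eq_zero_of_abs_deriv_le_mul_abs_self_of_eq_zero_right (K := K) hξc
      (fun t ht => (hasDerivAt_pi.2 (hξ t ht.1)).hasDerivWithinAt) (funext hξ0) ?_ T ⟨hT, le_rfl⟩
    · intro j
      rw [hz]
      rfl
    · intro t ht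
      refine (pi_norm_le_iff_of_nonneg (by positivity)).2 fun j => ?_
      refine le_trans ?_ (mul_le_mul_of_nonneg_right (hgK t ⟨ht.1, ht.2.le⟩ j) (norm_nonneg _))
      have hd : ∀ k l, |ξ t k - ξ t l| ≤ 2 * ‖ξ t‖ := fun k l => by
        have h1 := norm_le_pi_norm (ξ t) k
        have h2 := norm_le_pi_norm (ξ t) l
        have h3 := norm_sub_le (ξ t k) (ξ t l)
        rw [Real.norm_eq_abs] at h3
        linarith
      rw [add_mul, Finset.sum_mul, Finset.sum_mul]
      refine (norm_add_le _ _).trans (add_le_add ?_ ?_)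
      · refine (norm_sum_le _ _).trans (Finset.sum_le_sum fun k _ => ?_)
        rw [Finset.sum_mul]
        refine (norm_sum_le _ _).trans (Finset.sum_le_sum fun l _ => ?_)
        rw [Real.norm_eq_abs, abs_mul, mul_assoc |_| 2]
        exact mul_le_mul_of_nonneg_left (hd k l) (abs_nonneg _)
      · refine (norm_sum_le _ _).trans (Finset.sum_le_sum fun l _ => ?_)
        rw [Real.norm_eq_abs, mul_right_comm, abs_mul, mul_assoc |_| 2]
        exact mul_le_mul_of_nonneg_left (hd l j) (abs_nonneg _)
  refine ⟨key, fun t ht j => ?_⟩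
  have h := hξs t ht j
  simpa [key t ht] using h
end
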